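/- arXiv:2501.01322 — 3 statements merged into one kernel-verified Lean document; each statement's English description precedes it below -/
import Mathlib

section
/- There exists a constant c₁ > 0 such that for every real a and every irreducible fraction p/q (q ≥ 1) with |a - p/q| ≤ 1/q², every b ∈ ℝ, and all integers 0 < M < N: |Σ_{n=M}^{N} e^{2πi(an² + bn)}| ≤ c₁((N-M)/√q + √q). -/
open Real Finset

noncomputable def ee (x : ℝ) : ℂ := Complex.exp ((2 * π * x : ℝ) * Complex.I)

lemma ee_norm (x : ℝ) : ‖ee x‖ = 1 := Complex.norm_exp_ofReal_mul_I _

lemma ee_add (x y : ℝ) : ee (x + y) = ee x * ee y := by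
  unfold ee; rw [← Complex.exp_add]; congr 1; push_cast; ring

lemma ee_int (n : ℤ) : ee n = 1 := by
  unfold ee; rw [Complex.exp_eq_one_iff]; exact ⟨n, by push_cast; ring⟩

lemma ee_add_int (x : ℝ) (n : ℤ) : ee (x + n) = ee x := by
  rw [ee_add, ee_int, mul_one]

lemma ee_conj (x : ℝ) : (starRingEnd ℂ) (ee x) = ee (-x) := by
  unfold ee; rw [← Complex.exp_conj, map_mul, Complex.conj_ofReal, Complex.conj_I]; congr 1; push_cast; ring

lemma ee_sub_norm (x y : ℝ) : ‖ee x - ee y‖ ≤ 2 * π * |x - y| := by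
  have h : ee x - ee y = ee y * (ee (x - y) - 1) := by
    rw [mul_sub, ← ee_add]; simp
  rw [h, norm_mul, ee_norm, one_mul]
  have := Real.norm_exp_I_mul_ofReal_sub_one_le (x := 2 * π * (x - y))
  unfold ee
  rw [mul_comm _ Complex.I]
  refine this.trans ?_
  rw [Real.norm_eq_abs, abs_mul, abs_of_pos (by positivity)]

noncomputable def rs (c : ℤ → ℂ) (u v : ℝ) : ℂ := ∑ n ∈ Finset.Ioc ⌊u⌋ ⌊v⌋, c n

lemma rs_add (c : ℤ → ℂ) {u v w : ℝ} (h1 : u ≤ v) (h2 : v ≤ w) :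
    rs c u w = rs c u v + rs c v w := by
  unfold rs
  rw [← Finset.Ioc_union_Ioc_eq_Ioc (Int.floor_mono h1) (Int.floor_mono h2),
    Finset.sum_union]
  rw [Finset.disjoint_left]
  intro a ha hb
  simp only [Finset.mem_Ioc] at ha hb
  omega

lemma card_Ioc_le {u v : ℝ} (h : u ≤ v) : ((Finset.Ioc ⌊u⌋ ⌊v⌋).card : ℝ) ≤ v - u + 1 := by
  rw [Int.card_Ioc]
  have h0 : ⌊u⌋ ≤ ⌊v⌋ := Int.floor_mono h
  have : (((⌊v⌋ - ⌊u⌋).toNat : ℤ) : ℝ) = (⌊v⌋ : ℝ) - ⌊u⌋ := by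
    rw [Int.toNat_of_nonneg (by omega)]; push_cast; ring
  have h1 := Int.floor_le v
  have h2 := Int.lt_floor_add_one u
  have h3 : (((⌊v⌋ - ⌊u⌋).toNat : ℕ) : ℝ) = (((⌊v⌋ - ⌊u⌋).toNat : ℤ) : ℝ) := by norm_cast
  rw [h3, this]; linarith

lemma rs_card {c : ℤ → ℂ} (hc : ∀ n, ‖c n‖ ≤ 1) {u v : ℝ} (h : u ≤ v) :
    ‖rs c u v‖ ≤ v - u + 1 := by
  unfold rs
  refine (norm_sum_le _ _).trans ?_
  refine (Finset.sum_le_sum (fun n _ => hc n)).trans ?_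
  simpa using card_Ioc_le h

lemma rs_shift {c : ℤ → ℂ} {E : ℝ → ℝ}
    (hE : ∀ u v : ℝ, u ≤ v → ‖rs c u v‖ ≤ E (v - u)) {A B : ℝ} (hAB : A ≤ B) (u : ℝ) :
    ‖rs c (A - u) (B - u) - rs c A B‖ ≤ 2 * E |u| := by
  rcases le_total 0 u with hu | hu
  · have h1 := rs_add c (u := A - u) (v := A) (w := B) (by linarith) hAB
    have h2 := rs_add c (u := A - u) (v := B - u) (w := B) (by linarith) (by linarith)
    have : rs c (A - u) (B - u) - rs c A B = rs c (A - u) A - rs c (B - u) B := by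
      linear_combination h1 - h2
    rw [this, abs_of_nonneg hu]
    have e1 := hE (A - u) A (by linarith)
    have e2 := hE (B - u) B (by linarith)
    rw [sub_sub_cancel] at e1 e2
    refine (norm_sub_le _ _).trans (by linarith)
  · have h1 := rs_add c (u := A) (v := A - u) (w := B - u) (by linarith) (by linarith)
    have h2 := rs_add c (u := A) (v := B) (w := B - u) hAB (by linarith)
    have : rs c (A - u) (B - u) - rs c A B = rs c B (B - u) - rs c A (A - u) := by
      linear_combination h2 - h1
    rw [this, abs_of_nonpos hu]
    have e1 := hE A (A - u) (by linarith)
    have e2 := hE B (B - u) (by linarith)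
    rw [show A - u - A = -u by ring] at e1
    rw [show B - u - B = -u by ring] at e2
    refine (norm_sub_le _ _).trans (by linarith)

noncomputable def kg (x : ℝ) : ℂ := -1 / 2 - Complex.I / 2 * ((Real.cos (π * x) / Real.sin (π * x) : ℝ) : ℂ)

lemma kg_mul {x : ℝ} (h : Real.sin (π * x) ≠ 0) : kg x * (ee x - 1) = 1 := by
  have h' : (Complex.sin (π * x)) ≠ 0 := by
    intro h0; apply h; exact_mod_cast h0
  unfold kg ee
  rw [Complex.exp_mul_I]
  push_cast
  rw [show (2 * (π:ℂ) * x) = 2 * (π * x) by ring, Complex.cos_two_mul, Complex.sin_two_mul]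
  have hs := Complex.sin_sq_add_cos_sq ((π:ℂ) * x)
  generalize Complex.sin (π * x) = s at *
  generalize Complex.cos (π * x) = k at *
  field_simp
  ring_nf
  rw [Complex.I_sq]
  linear_combination (-2 * k * Complex.I) * hs

lemma sin_lower {x δ : ℝ} (hδ : 0 < δ) (h1 : δ ≤ x) (h2 : x ≤ 1 - δ) : 2 * δ ≤ Real.sin (π * x) := by
  have hp := Real.pi_pos
  rcases le_total x (1 / 2) with h | h
  · have := Real.mul_le_sin (x := π * x) (by nlinarith) (by nlinarith)
    have e : 2 / π * (π * x) = 2 * x := by field_simp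
    linarith
  · have := Real.mul_le_sin (x := π * (1 - x)) (by nlinarith) (by nlinarith)
    have e : 2 / π * (π * (1 - x)) = 2 * (1 - x) := by field_simp
    have e2 : Real.sin (π * (1 - x)) = Real.sin (π * x) := by
      rw [← Real.sin_pi_sub]; congr 1; ring
    linarith

lemma cot_bound {x δ : ℝ} (hδ : 0 < δ) (h1 : δ ≤ x) (h2 : x ≤ 1 - δ) :
    |Real.cos (π * x) / Real.sin (π * x)| ≤ 1 / (2 * δ) := by
  have h := sin_lower hδ h1 h2
  rw [abs_div, abs_of_pos (a := Real.sin (π * x)) (by linarith)]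
  exact div_le_div₀ zero_le_one (Real.abs_cos_le_one _) (by linarith) h

lemma kg_bound {x δ : ℝ} (hδ : 0 < δ) (h1 : δ ≤ x) (h2 : x ≤ 1 - δ) :
    ‖kg x‖ ≤ 1 / (2 * δ) := by
  unfold kg
  refine (norm_sub_le _ _).trans ?_
  rw [norm_mul, Complex.norm_real, Real.norm_eq_abs]
  have := cot_bound hδ h1 h2
  have e1 : ‖(-1 / 2 : ℂ)‖ = 1 / 2 := by norm_num
  have e2 : ‖(Complex.I / 2 : ℂ)‖ = 1 / 2 := by norm_num
  have e3 : 1 ≤ 1 / (2 * δ) := by rw [le_div_iff₀ (by linarith)]; linarith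
  rw [e1, e2]; linarith

lemma kg_sub {x y δ : ℝ} (hδ : 0 < δ) (h1 : δ ≤ x) (hxy : x ≤ y) (h2 : y ≤ 1 - δ) :
    ‖kg x - kg y‖ = 1 / 2 * (Real.cos (π * x) / Real.sin (π * x) - Real.cos (π * y) / Real.sin (π * y)) := by
  have hx := sin_lower hδ h1 (hxy.trans h2)
  have hy := sin_lower hδ (h1.trans hxy) h2
  have hp := Real.pi_pos
  have e : kg x - kg y = -(Complex.I / 2) * ((Real.cos (π * x) / Real.sin (π * x) - Real.cos (π * y) / Real.sin (π * y) : ℝ) : ℂ) := by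
    unfold kg; push_cast; ring
  rw [e, norm_mul, Complex.norm_real, Real.norm_eq_abs, abs_of_nonneg]
  · norm_num
  · have e3 : Real.cos (π * x) / Real.sin (π * x) - Real.cos (π * y) / Real.sin (π * y) =
        Real.sin (π * y - π * x) / (Real.sin (π * x) * Real.sin (π * y)) := by
      rw [Real.sin_sub]
      have : Real.sin (π * x) ≠ 0 := by linarith
      have : Real.sin (π * y) ≠ 0 := by linarith
      field_simp
    rw [e3]
    apply div_nonneg
    · apply Real.sin_nonneg_of_nonneg_of_le_pi <;> nlinarith
    · apply mul_nonneg <;> linarith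

lemma kusmin_landau (f : ℕ → ℂ) (x : ℕ → ℝ) (δ : ℝ) (hδ : 0 < δ)
    (hf : ∀ n, f (n + 1) = f n * ee (x n)) (hf1 : ∀ n, ‖f n‖ = 1) (hx : Monotone x) (K : ℕ)
    (h1 : ∀ n < K, δ ≤ x n) (h2 : ∀ n < K, x n ≤ 1 - δ) :
    ‖∑ n ∈ Finset.range K, f n‖ ≤ 2 / δ := by
  have hstep : ∀ n < K, f n = kg (x n) * (f (n + 1) - f n) := by
    intro n hn
    have hs := sin_lower hδ (h1 n hn) (h2 n hn)
    have := kg_mul (x := x n) (by linarith)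
    rw [hf]
    linear_combination (-f n) * this
  have key : ∀ k, k + 1 ≤ K → ‖∑ n ∈ Finset.range (k + 1), f n - kg (x k) * f (k + 1)‖ ≤
      ‖kg (x 0)‖ + 1 / 2 * (Real.cos (π * x 0) / Real.sin (π * x 0) -
        Real.cos (π * x k) / Real.sin (π * x k)) := by
    intro k
    induction k with
    | zero =>
      intro hk
      have := hstep 0 hk
      simp only [zero_add, Finset.range_one, Finset.sum_singleton, sub_self, mul_zero, add_zero] at *
      have e : f 0 - kg (x 0) * f 1 = - (kg (x 0) * f 0) := by linear_combination this
      rw [e, norm_neg, norm_mul, hf1, mul_one]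
    | succ k ih =>
      intro hk
      have ih := ih (by omega)
      have := hstep (k + 1) hk
      rw [Finset.sum_range_succ]
      have e : ∑ n ∈ Finset.range (k + 1), f n + f (k + 1) - kg (x (k + 1)) * f (k + 1 + 1) =
        (∑ n ∈ Finset.range (k + 1), f n - kg (x k) * f (k + 1)) + (kg (x k) - kg (x (k + 1))) * f (k + 1) := by
        linear_combination this
      rw [e]
      refine (norm_add_le _ _).trans ?_
      rw [norm_mul, hf1, mul_one, kg_sub hδ (h1 k (by omega)) (hx (Nat.le_succ k)) (h2 (k + 1) (by omega))]
      linarith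
  rcases K with _ | k
  · simp; positivity
  · have hk := key k le_rfl
    have a1 := kg_bound hδ (h1 0 (by omega)) (h2 0 (by omega))
    have a2 := kg_bound hδ (h1 k (by omega)) (h2 k (by omega))
    have a3 := abs_le.1 (cot_bound hδ (h1 0 (by omega)) (h2 0 (by omega)))
    have a4 := abs_le.1 (cot_bound hδ (h1 k (by omega)) (h2 k (by omega)))
    have e : ∑ n ∈ Finset.range (k + 1), f n = (∑ n ∈ Finset.range (k + 1), f n - kg (x k) * f (k + 1)) + kg (x k) * f (k + 1) := by ring
    rw [e]
    refine (norm_add_le _ _).trans ?_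
    rw [norm_mul, hf1, mul_one]
    have : 2 / δ = 4 * (1 / (2 * δ)) := by field_simp; norm_num
    have h0 : 0 ≤ 1 / (2 * δ) := by positivity
    rw [this]
    linarith

lemma sum_Ioc_range (c : ℤ → ℂ) (a b : ℤ) :
    ∑ n ∈ Finset.Ioc a b, c n = ∑ k ∈ Finset.range (b - a).toNat, c (a + 1 + k) := by
  symm
  apply Finset.sum_bij (fun (k : ℕ) _ => a + 1 + (k : ℤ))
  · intro k hk; simp only [Finset.mem_range, Finset.mem_Ioc] at *; omega
  · intro k _ l _ h; simpa using h
  · intro n hn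
    simp only [Finset.mem_Ioc] at hn
    exact ⟨(n - a - 1).toNat, by simp only [Finset.mem_range]; omega, by omega⟩
  · intros; rfl

/-- quadratic phase -/
noncomputable def qc (α β : ℝ) (n : ℤ) : ℂ := ee (α * n ^ 2 / 2 + β * n)

lemma qc_norm (α β : ℝ) (n : ℤ) : ‖qc α β n‖ = 1 := ee_norm _

noncomputable def uu (α β y : ℝ) : ℝ := (y - β - α / 2) / α

lemma uu_mono {α : ℝ} (hα : 0 < α) (β : ℝ) {y y' : ℝ} (h : y ≤ y') : uu α β y ≤ uu α β y' := by
  unfold uu; gcongr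

lemma uu_sub {α : ℝ} (hα : 0 < α) (β : ℝ) (y y' : ℝ) : uu α β y' - uu α β y = (y' - y) / α := by
  unfold uu; field_simp; ring

lemma kl_rs {α β δ y y' : ℝ} (hα : 0 < α) (hδ : 0 < δ) (j : ℤ) (h1 : j + δ ≤ y)
    (h2 : y' ≤ j + 1 - δ) : ‖rs (qc α β) (uu α β y) (uu α β y')‖ ≤ 2 / δ := by
  unfold rs
  rw [sum_Ioc_range]
  set a := ⌊uu α β y⌋ with ha
  set b := ⌊uu α β y'⌋ with hb
  apply kusmin_landau (fun k : ℕ => qc α β (a + 1 + k))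
    (fun k : ℕ => α * (a + 1 + k) + α / 2 + β - j) δ hδ
  · intro n
    simp only [qc]
    rw [← ee_add, ← ee_add_int _ (-j * 1)]
    rw [← ee_add_int (_ + _) j, ← ee_add_int (_ + _) (-j)]
    congr 1; push_cast; ring
  · intro n; exact qc_norm _ _ _
  · intro m n h
    simp only
    have : (m : ℝ) ≤ n := by exact_mod_cast h
    nlinarith
  · intro n hn
    have : uu α β y < a + 1 := Int.lt_floor_add_one _
    unfold uu at this
    rw [div_lt_iff₀ hα] at this
    have h0 : (0:ℝ) ≤ n := Nat.cast_nonneg n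
    nlinarith
  · intro n hn
    have h3 : (a + 1 + n : ℤ) ≤ b := by omega
    have h4 : ((a + 1 + n : ℤ) : ℝ) ≤ uu α β y' := Int.le_floor.1 h3
    unfold uu at h4
    rw [le_div_iff₀ hα] at h4
    push_cast at h4
    nlinarith

lemma unit_rs {α β y y' : ℝ} (hα : 0 < α) (hα1 : α ≤ 1) (j : ℤ) (hy : y ≤ y')
    (h1 : j - √α / 2 ≤ y) (h2 : y' ≤ j + 1 - √α / 2) :
    ‖rs (qc α β) (uu α β y) (uu α β y')‖ ≤ 6 / √α := by
  have hs : 0 < √α := Real.sqrt_pos.2 hα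
  have hss : √α * √α = α := Real.mul_self_sqrt hα.le
  have hs1 : √α ≤ 1 := by rw [Real.sqrt_le_iff]; constructor <;> linarith
  have triv : ∀ z z' : ℝ, z ≤ z' → z' - z ≤ √α → ‖rs (qc α β) (uu α β z) (uu α β z')‖ ≤ 2 / √α := by
    intro z z' hz hzz
    refine (rs_card (fun n => (qc_norm α β n).le) (uu_mono hα β hz)).trans ?_
    rw [uu_sub hα]
    have : (z' - z) / α ≤ 1 / √α := by
      rw [div_le_div_iff₀ hα hs]; nlinarith
    have h3 : 1 ≤ 1 / √α := by rw [le_div_iff₀ hs]; linarith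
    have : 2 / √α = 1 / √α + 1 / √α := by ring
    linarith
  have kl : ∀ z z' : ℝ, j + √α / 2 ≤ z → z' ≤ j + 1 - √α / 2 → ‖rs (qc α β) (uu α β z) (uu α β z')‖ ≤ 4 / √α := by
    intro z z' hz hz'
    refine (kl_rs hα (half_pos hs) j hz hz').trans (le_of_eq ?_)
    field_simp; norm_num
  have e : 6 / √α = 2 / √α + 4 / √α := by ring
  have p1 : 0 < 2 / √α := by positivity
  have p2 : 0 < 4 / √α := by positivity
  rcases le_total y' (j + √α / 2) with h | h
  · have := triv y y' hy (by linarith)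
    linarith
  rcases le_total (j + √α / 2) y with h' | h'
  · have := kl y y' h' h2
    linarith
  · rw [rs_add _ (uu_mono hα β h') (uu_mono hα β h)]
    refine (norm_add_le _ _).trans ?_
    have := triv _ _ h' (by linarith)
    have := kl _ _ le_rfl h2
    linarith

lemma one_rs {α β y y' : ℝ} (hα : 0 < α) (hα1 : α ≤ 1) (hy : y ≤ y') (hy' : y' ≤ y + 1) :
    ‖rs (qc α β) (uu α β y) (uu α β y')‖ ≤ 12 / √α := by
  have hs : 0 < √α := Real.sqrt_pos.2 hα
  set j := ⌊y + √α / 2⌋ with hj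
  have a1 : (j : ℝ) ≤ y + √α / 2 := Int.floor_le _
  have a2 : y + √α / 2 < j + 1 := Int.lt_floor_add_one _
  have e : 12 / √α = 6 / √α + 6 / √α := by ring
  have p1 : 0 < 6 / √α := by positivity
  rcases le_total y' (j + 1 - √α / 2) with h | h
  · have := unit_rs (β := β) hα hα1 j hy (by linarith) h
    linarith
  · have h3 : y ≤ j + 1 - √α / 2 := by linarith
    rw [rs_add _ (uu_mono hα β h3) (uu_mono hα β h)]
    refine (norm_add_le _ _).trans ?_
    have := unit_rs (β := β) hα hα1 j h3 (by linarith) le_rfl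
    have := unit_rs (β := β) hα hα1 (j + 1) h (by push_cast; linarith) (by push_cast; linarith)
    linarith

lemma nat_rs {α β : ℝ} (hα : 0 < α) (hα1 : α ≤ 1) (m : ℕ) : ∀ y y' : ℝ, y ≤ y' → y' ≤ y + m →
    ‖rs (qc α β) (uu α β y) (uu α β y')‖ ≤ 12 * m / √α := by
  have hs : 0 < √α := Real.sqrt_pos.2 hα
  induction m with
  | zero =>
    intro y y' h1 h2
    have : y = y' := by simp at h2; linarith
    subst this
    simp [rs]
  | succ m ih =>
    intro y y' h1 h2
    push_cast at h2
    have e : 12 * ((m + 1 : ℕ) : ℝ) / √α = 12 * m / √α + 12 / √α := by push_cast; ring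
    have p1 : 0 ≤ 12 * (m : ℝ) / √α := by positivity
    rw [e]
    rcases le_total y' (y + 1) with h | h
    · have := one_rs (β := β) hα hα1 h1 h
      linarith
    · rw [rs_add _ (uu_mono hα β (show y ≤ y + 1 by linarith)) (uu_mono hα β h)]
      refine (norm_add_le _ _).trans ?_
      have := one_rs (β := β) hα hα1 (show y ≤ y + 1 by linarith) le_rfl
      have := ih (y + 1) y' h (by linarith)
      linarith

/-- second derivative test -/
lemma second_deriv {α β : ℝ} (hα : 0 < α) (hα1 : α ≤ 1) (u v : ℝ) (huv : u ≤ v) :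
    ‖rs (qc α β) u v‖ ≤ 12 / √α * (α * (v - u) + 1) := by
  have hs : 0 < √α := Real.sqrt_pos.2 hα
  have key : ∀ w, uu α β (α * w + β + α / 2) = w := by
    intro w; unfold uu; field_simp; ring
  have h := nat_rs (β := β) hα hα1 ⌈α * (v - u)⌉₊ (α * u + β + α / 2) (α * v + β + α / 2)
    (by nlinarith) (by have := Nat.le_ceil (α * (v - u)); nlinarith)
  rw [key, key] at h
  refine h.trans ?_
  have h2 := (Nat.ceil_lt_add_one (a := α * (v - u)) (mul_nonneg hα.le (by linarith))).le
  rw [mul_div_right_comm]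
  gcongr

open MeasureTheory in
lemma smooth_id {c : ℤ → ℂ} (hc : ∀ n, ‖c n‖ ≤ 1) {h : ℝ → ℂ} (hh : Integrable h) (hcont : Continuous h)
    {A B : ℝ} (hAB : A ≤ B) :
    ∫ t in A..B, ∑' n : ℤ, c n * h (t - n) = ∫ u, h u * rs c (A - u) (B - u) := by
  classical
  rw [intervalIntegral.integral_of_le hAB, ← integral_indicator measurableSet_Ioc]
  set G : ℤ → ℝ → ℂ := fun n => (Set.Ioc A B).indicator (fun t => c n * h (t - n)) with hG
  have hGm : ∀ n, StronglyMeasurable (G n) := by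
    intro n
    apply StronglyMeasurable.indicator _ measurableSet_Ioc
    exact Continuous.stronglyMeasurable (by fun_prop)
  have hGs : ∀ (n : ℤ) u, G n (u + n) = if n ∈ Finset.Ioc ⌊A - u⌋ ⌊B - u⌋ then h u * c n else 0 := by
    intro n u
    simp only [hG, Set.indicator_apply, Finset.mem_Ioc, Set.mem_Ioc, Int.floor_lt, Int.le_floor]
    have : (A < u + n ∧ u + n ≤ B) ↔ (A - u < n ∧ (n : ℝ) ≤ B - u) := by
      constructor <;> rintro ⟨h1, h2⟩ <;> constructor <;> linarith
    simp only [this]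
    split_ifs
    · rw [add_sub_cancel_right, mul_comm]
    · rfl
  have hpt : ∀ u, ∑' n : ℤ, G n (u + n) = h u * rs c (A - u) (B - u) := by
    intro u
    rw [tsum_eq_sum (s := Finset.Ioc ⌊A - u⌋ ⌊B - u⌋)]
    · rw [rs, Finset.mul_sum]
      apply Finset.sum_congr rfl
      intro n hn
      rw [hGs, if_pos hn]
    · intro n hn
      rw [hGs, if_neg hn]
  have hfin : ∑' n : ℤ, ∫⁻ u, ‖G n (u + n)‖ₑ ≠ ⊤ := by
    rw [← lintegral_tsum]
    · have hle : ∀ u, ∑' n : ℤ, ‖G n (u + n)‖ₑ ≤ ENNReal.ofReal (B - A + 1) * ‖h u‖ₑ := by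
        intro u
        rw [tsum_eq_sum (s := Finset.Ioc ⌊A - u⌋ ⌊B - u⌋)]
        · have : ∀ n ∈ Finset.Ioc ⌊A - u⌋ ⌊B - u⌋, ‖G n (u + n)‖ₑ ≤ ‖h u‖ₑ := by
            intro n hn
            rw [hGs, if_pos hn, enorm_mul]
            have : ‖c n‖ₑ ≤ 1 := by
              rw [← ofReal_norm]; exact ENNReal.ofReal_le_one.2 (hc n)
            calc _ ≤ ‖h u‖ₑ * 1 := by gcongr
              _ = _ := mul_one _
          refine (Finset.sum_le_card_nsmul _ _ _ this).trans ?_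
          rw [nsmul_eq_mul]
          gcongr
          rw [← ENNReal.ofReal_natCast]
          apply ENNReal.ofReal_le_ofReal
          refine (card_Ioc_le (by linarith)).trans (by linarith)
        · intro n hn
          rw [hGs, if_neg hn, enorm_zero]
      refine ((lintegral_mono hle).trans_lt ?_).ne
      rw [lintegral_const_mul' _ _ ENNReal.ofReal_ne_top]
      exact ENNReal.mul_lt_top ENNReal.ofReal_lt_top hh.2
    · intro n
      exact ((hGm n).comp_measurable (measurable_add_const _)).enorm.aemeasurable
  have hfin2 : ∑' n : ℤ, ∫⁻ u, ‖G n u‖ₑ ≠ ⊤ := by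
    have : ∀ n : ℤ, ∫⁻ u, ‖G n u‖ₑ = ∫⁻ u, ‖G n (u + n)‖ₑ := fun n =>
      (lintegral_add_right_eq_self (fun u => ‖G n u‖ₑ) (n : ℝ)).symm
    simp_rw [this]; exact hfin
  have e1 : (Set.Ioc A B).indicator (fun t => ∑' n : ℤ, c n * h (t - n)) = fun t => ∑' n, G n t := by
    funext t
    by_cases ht : t ∈ Set.Ioc A B <;> simp [hG, ht]
  rw [e1, integral_tsum (fun n => (hGm n).aestronglyMeasurable) hfin2]
  have : ∀ n : ℤ, ∫ u, G n u = ∫ u, G n (u + n) := fun n =>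
      (integral_add_right_eq_self (fun u => G n u) (n : ℝ)).symm
  simp_rw [this]
  rw [← integral_tsum (f := fun (n : ℤ) u => G n (u + n))
    (fun n => ((hGm n).comp_measurable (measurable_add_const _)).aestronglyMeasurable) hfin]
  simp_rw [hpt]

noncomputable def rs2 (c : ℤ → ℂ) (p : ℤ × ℤ) : ℂ := ∑ n ∈ Finset.Ioc p.1 p.2, c n

lemma rs2_meas (c : ℤ → ℂ) : Measurable (rs2 c) := measurable_of_countable _

lemma fl_meas (A B : ℝ) : Measurable (fun u : ℝ => (⌊A - u⌋, ⌊B - u⌋)) :=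
  Measurable.prodMk (Int.measurable_floor.comp (measurable_id.const_sub A))
    (Int.measurable_floor.comp (measurable_id.const_sub B))

lemma rs_meas (c : ℤ → ℂ) (A B : ℝ) : Measurable (fun u : ℝ => rs c (A - u) (B - u)) := by
  have : (fun u : ℝ => rs c (A - u) (B - u)) = fun u => rs2 c (⌊A - u⌋, ⌊B - u⌋) := by
    funext u; simp only [rs, rs2]
  rw [this]
  exact (rs2_meas c).comp (fl_meas A B)

open MeasureTheory in
lemma smooth_err {c : ℤ → ℂ} (hc : ∀ n, ‖c n‖ ≤ 1) {h : ℝ → ℂ} (hcont : Continuous h)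
    {γ D : ℝ} (hγ : 0 < γ) (hD : 0 ≤ D) (hb : ∀ u, ‖h u‖ ≤ γ * Real.exp (-(π * γ ^ 2 / 2) * u ^ 2))
    (hE : ∀ u v : ℝ, u ≤ v → ‖rs c u v‖ ≤ D * (γ * (v - u) + 1))
    {A B : ℝ} (hAB : A ≤ B) :
    Integrable h ∧
    ‖(∫ t in A..B, ∑' n : ℤ, c n * h (t - n)) - (∫ u, h u) * rs c A B‖ ≤ 8 * D := by
  have hp := Real.pi_pos
  have i2 : Integrable (fun u : ℝ => γ * Real.exp (-(π * γ ^ 2 / 2) * u ^ 2)) :=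
    (integrable_exp_neg_mul_sq (by positivity)).const_mul _
  have i4 : Integrable (fun u : ℝ => γ * Real.exp (-(π * γ ^ 2 / 4) * u ^ 2)) :=
    (integrable_exp_neg_mul_sq (by positivity)).const_mul _
  have hh : Integrable h := i2.mono' hcont.aestronglyMeasurable (Filter.Eventually.of_forall hb)
  refine ⟨hh, ?_⟩
  rw [smooth_id hc hh hcont hAB]
  have hbd : ∀ u, ‖h u * (rs c (A - u) (B - u) - rs c A B)‖ ≤
      (2 * D) * (γ * Real.exp (-(π * γ ^ 2 / 4) * u ^ 2) + γ * Real.exp (-(π * γ ^ 2 / 2) * u ^ 2)) := by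
    intro u
    rw [norm_mul]
    have h1 := rs_shift (E := fun x => D * (γ * x + 1)) hE hAB u
    have h2 : γ * |u| ≤ Real.exp (π * γ ^ 2 / 4 * u ^ 2) := by
      have := Real.add_one_le_exp (π * γ ^ 2 / 4 * u ^ 2)
      have h3 : (γ * |u|) ^ 2 = γ ^ 2 * u ^ 2 := by rw [mul_pow, sq_abs]
      have h4 := Real.pi_gt_three
      have h5 : 3 * (γ * |u|) ^ 2 ≤ π * (γ * |u|) ^ 2 := by gcongr
      nlinarith [sq_nonneg (γ * |u| - 2)]
    have h6 : Real.exp (-(π * γ ^ 2 / 4) * u ^ 2) =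
        Real.exp (π * γ ^ 2 / 4 * u ^ 2) * Real.exp (-(π * γ ^ 2 / 2) * u ^ 2) := by
      rw [← Real.exp_add]; congr 1; ring
    calc _ ≤ (γ * Real.exp (-(π * γ ^ 2 / 2) * u ^ 2)) * (2 * (D * (γ * |u| + 1))) := by
          gcongr
          exact hb u
      _ = 2 * D * (γ * (γ * |u| * Real.exp (-(π * γ ^ 2 / 2) * u ^ 2)) + γ * Real.exp (-(π * γ ^ 2 / 2) * u ^ 2)) := by ring
      _ ≤ _ := by rw [h6]; gcongr
  have hint : Integrable (fun u => h u * (rs c (A - u) (B - u) - rs c A B)) := by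
    refine ((i4.add i2).const_mul (2 * D)).mono' ?_ (Filter.Eventually.of_forall hbd)
    apply hcont.aestronglyMeasurable.mul
    apply AEStronglyMeasurable.sub _ aestronglyMeasurable_const
    exact (rs_meas c A B).aestronglyMeasurable
  have e' : (∫ u, h u * rs c (A - u) (B - u)) - (∫ u, h u) * rs c A B =
      ∫ u, h u * (rs c (A - u) (B - u) - rs c A B) := by
    have h1 : ∫ u, h u * rs c (A - u) (B - u) = ∫ u, (h u * (rs c (A - u) (B - u) - rs c A B) + h u * rs c A B) := by
      congr 1; funext u; ring
    rw [h1, integral_add hint (hh.mul_const _), integral_mul_const]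
    ring
  rw [e']
  refine (norm_integral_le_of_norm_le ((i4.add i2).const_mul (2 * D)) (Filter.Eventually.of_forall hbd)).trans ?_
  rw [integral_const_mul]
  simp only [Pi.add_apply]
  rw [integral_add i4 i2, integral_const_mul, integral_const_mul, integral_gaussian, integral_gaussian]
  have s1 : √(π / (π * γ ^ 2 / 4)) = 2 / γ := by
    rw [show π / (π * γ ^ 2 / 4) = (2 / γ) ^ 2 by field_simp; norm_num, Real.sqrt_sq (by positivity)]
  have s2 : √(π / (π * γ ^ 2 / 2)) ≤ 2 / γ := by
    rw [← s1]; gcongr; norm_num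
  have s3 : γ * (2 / γ) = 2 := by field_simp
  have s4 : γ * √(π / (π * γ ^ 2 / 2)) ≤ γ * (2 / γ) := by gcongr
  rw [s1]
  nlinarith

noncomputable def dk (α : ℝ) (u : ℝ) : ℂ := Complex.exp (-(π / (1 + Complex.I * α)) * (u : ℂ) ^ 2)

noncomputable def zz (α : ℝ) : ℂ := (α : ℂ) ^ 2 - Complex.I * α

lemma one_add_ne (α : ℝ) : (1 + Complex.I * α : ℂ) ≠ 0 := by
  intro h
  have := congrArg Complex.re h
  simp at this

lemma zz_eq (α : ℝ) : zz α = -Complex.I * α * (1 + Complex.I * α) := by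
  unfold zz
  linear_combination ((α:ℂ) ^ 2) * Complex.I_sq

noncomputable def dc (α β : ℝ) (m : ℤ) : ℂ := ee (-(m - β) ^ 2 / (2 * α))

lemma theta_id {α : ℝ} (hα : 0 < α) (β t : ℝ) :
    ∑' n : ℤ, qc α β n * ((α * Real.exp (-(π * α ^ 2) * (t - n) ^ 2) : ℝ) : ℂ) =
      α * (1 / zz α ^ (1 / 2 : ℂ)) * ∑' m : ℤ, dc α β m * dk α (α * t + β - m) := by
  have hz : 0 < (zz α).re := by
    have : zz α = ((α ^ 2 : ℝ) : ℂ) - Complex.I * α := by unfold zz; push_cast; rfl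
    rw [this]
    simp only [Complex.sub_re, Complex.ofReal_re, Complex.mul_re, Complex.I_re, Complex.I_im,
      Complex.ofReal_im]
    nlinarith
  have hα' : (α : ℂ) ≠ 0 := by exact_mod_cast hα.ne'
  have h1 := one_add_ne α
  have key := Complex.tsum_exp_neg_quadratic hz ((α:ℂ) ^ 2 * t + Complex.I * β)
  have e1 : ∀ n : ℤ, qc α β n * ((α * Real.exp (-(π * α ^ 2) * (t - n) ^ 2) : ℝ) : ℂ) =
      (α * Complex.exp (-π * α ^ 2 * t ^ 2)) * Complex.exp (-π * zz α * n ^ 2 + 2 * π * ((α:ℂ) ^ 2 * t + Complex.I * β) * n) := by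
    intro n
    rw [mul_assoc, ← Complex.exp_add]
    unfold qc ee
    rw [Complex.ofReal_mul α, mul_left_comm, Complex.ofReal_exp, ← Complex.exp_add]
    congr 2
    unfold zz
    push_cast
    ring
  have e2 : ∀ m : ℤ, dc α β m * dk α (α * t + β - m) =
      Complex.exp (-π * α ^ 2 * t ^ 2) * Complex.exp (-π / zz α * (m + Complex.I * ((α:ℂ) ^ 2 * t + Complex.I * β)) ^ 2) := by
    intro m
    unfold dc dk ee
    rw [← Complex.exp_add, ← Complex.exp_add]
    congr 1
    obtain ⟨w, hw⟩ : ∃ w : ℂ, w = (1 + Complex.I * α)⁻¹ := ⟨_, rfl⟩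
    obtain ⟨a, ha⟩ : ∃ a : ℂ, a = (α : ℂ)⁻¹ := ⟨_, rfl⟩
    have hw1 : w * (1 + Complex.I * α) = 1 := by rw [hw]; exact inv_mul_cancel₀ h1
    have ha1 : a * α = 1 := by rw [ha]; exact inv_mul_cancel₀ hα'
    have hz1 : -(π : ℂ) / zz α = -π * (Complex.I * w * a) := by
      rw [zz_eq, div_eq_mul_inv, mul_inv, mul_inv, ← hw, ← ha, inv_neg, Complex.inv_I]; ring
    have hm : (m : ℂ) + Complex.I * ((α:ℂ) ^ 2 * t + Complex.I * β) = (m - β) + Complex.I * (α:ℂ) ^ 2 * t := by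
      linear_combination (β : ℂ) * Complex.I_sq
    rw [hz1, hm, div_eq_mul_inv (π : ℂ), ← hw]
    push_cast
    rw [div_eq_mul_inv, mul_inv, ← ha]
    linear_combination (π * Complex.I * a * (m - β) ^ 2 - π * α ^ 2 * t ^ 2) * hw1 +
      π * w * (-((m:ℂ) - β) ^ 2 + 2 * α * t * (m - β) + Complex.I * α ^ 3 * t ^ 2) * Complex.I_sq +
      π * Complex.I ^ 2 * w * (-((m:ℂ) - β) ^ 2 + 2 * α * t * (m - β) + Complex.I * α ^ 3 * t ^ 2) * ha1
  simp_rw [e1, e2]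
  rw [tsum_mul_left, tsum_mul_left, key]
  ring

lemma sqrt_norm (z : ℂ) : ‖z ^ (1 / 2 : ℂ)‖ = √‖z‖ := by
  have h := Complex.cpow_nat_inv_pow z (n := 2) two_ne_zero
  have h2 : ‖z ^ (1 / 2 : ℂ)‖ ^ 2 = ‖z‖ := by
    have e : (1 / 2 : ℂ) = ((2 : ℕ) : ℂ)⁻¹ := by norm_num
    rw [e, ← norm_pow, h]
  rw [← h2, Real.sqrt_sq (norm_nonneg _)]

lemma dk_bound {α : ℝ} (hα : 0 < α) (hα1 : α ≤ 1) (u : ℝ) :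
    ‖dk α u‖ ≤ 1 * Real.exp (-(π * 1 ^ 2 / 2) * u ^ 2) := by
  unfold dk
  rw [Complex.norm_exp, one_mul]
  apply Real.exp_le_exp.2
  have h1 := one_add_ne α
  have e : (-(π / (1 + Complex.I * α)) * (u : ℂ) ^ 2) = ((π * u ^ 2 : ℝ) : ℂ) * (-(1 + Complex.I * α)⁻¹) := by
    push_cast; field_simp
  rw [e, Complex.re_ofReal_mul, Complex.neg_re, Complex.inv_re]
  have e3 : Complex.normSq (1 + Complex.I * α) = 1 + α ^ 2 := by
    simp [Complex.normSq_apply]; ring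
  rw [e3]
  have e4 : (1 + Complex.I * (α : ℂ)).re = 1 := by simp
  rw [e4]
  have : (1:ℝ) / 2 ≤ 1 / (1 + α ^ 2) := by
    rw [div_le_div_iff₀ (by norm_num) (by positivity)]; nlinarith
  have hp : 0 ≤ π * u ^ 2 := by positivity
  nlinarith

lemma dk_int (α : ℝ) : ‖∫ u : ℝ, dk α u‖ = √‖(1 + Complex.I * α : ℂ)‖ := by
  unfold dk
  have h1 := one_add_ne α
  have hp : (π : ℂ) ≠ 0 := by exact_mod_cast Real.pi_ne_zero
  rw [integral_gaussian_complex]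
  · rw [sqrt_norm]; congr 2; field_simp
  · have : ((π:ℂ) / (1 + Complex.I * α)) = ((π : ℝ) : ℂ) * (1 + Complex.I * α)⁻¹ := by ring
    rw [this, Complex.re_ofReal_mul, Complex.inv_re]
    have : 0 < Complex.normSq (1 + Complex.I * α) := Complex.normSq_pos.2 h1
    simp
    positivity

/-- approximate functional equation -/
lemma afe_dc {α : ℝ} (hα : 0 < α) (hα1 : α ≤ 1) (β : ℝ) {A B : ℝ} (hAB : A ≤ B) :
    ‖rs (qc α β) A B‖ ≤ 1 / √α * (‖rs (dc α β) (α * A + β) (α * B + β)‖ + 104) := by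
  have hs : 0 < √α := Real.sqrt_pos.2 hα
  have hp := Real.pi_pos
  have hAB' : α * A + β ≤ α * B + β := by nlinarith
  obtain ⟨-, h1⟩ := smooth_err (c := qc α β) (h := fun u : ℝ => ((α * Real.exp (-(π * α ^ 2) * u ^ 2) : ℝ) : ℂ))
    (fun n => (qc_norm α β n).le) (by fun_prop) (γ := α) (D := 12 / √α) hα (by positivity)
    (by
      intro u
      rw [Complex.norm_real, Real.norm_eq_abs, abs_of_pos (by positivity)]
      gcongr
      linarith [show 0 < π * α ^ 2 by positivity]) (second_deriv hα hα1) hAB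
  obtain ⟨-, h2⟩ := smooth_err (c := dc α β) (h := dk α)
    (fun n => (ee_norm _).le) (by unfold dk; fun_prop) (γ := 1) (D := 1) one_pos zero_le_one
    (dk_bound hα hα1) (fun u v huv => by
      have := rs_card (c := dc α β) (fun n => (ee_norm _).le) huv
      linarith) hAB'
  have i1 : ∫ u : ℝ, ((α * Real.exp (-(π * α ^ 2) * u ^ 2) : ℝ) : ℂ) = 1 := by
    rw [integral_complex_ofReal, MeasureTheory.integral_const_mul, integral_gaussian]
    rw [show π / (π * α ^ 2) = (1 / α) ^ 2 by field_simp, Real.sqrt_sq (by positivity)]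
    rw [mul_one_div_cancel hα.ne']; simp
  rw [i1, one_mul] at h1
  have hth : ∫ t in A..B, ∑' n : ℤ, qc α β n * ((α * Real.exp (-(π * α ^ 2) * (t - n) ^ 2) : ℝ) : ℂ) =
      (1 / zz α ^ (1 / 2 : ℂ)) * ∫ s in (α * A + β)..(α * B + β), ∑' m : ℤ, dc α β m * dk α (s - m) := by
    simp_rw [theta_id hα]
    rw [intervalIntegral.integral_const_mul,
      intervalIntegral.integral_comp_mul_add (fun s => ∑' m : ℤ, dc α β m * dk α (s - m)) hα.ne']
    rw [Complex.real_smul]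
    have hα' : (α : ℂ) ≠ 0 := by exact_mod_cast hα.ne'
    push_cast
    field_simp
  rw [hth] at h1
  set X := ∫ s in (α * A + β)..(α * B + β), ∑' m : ℤ, dc α β m * dk α (s - m) with hX
  set R := rs (dc α β) (α * A + β) (α * B + β)
  set J := ‖(1 + Complex.I * α : ℂ)‖ with hJ
  have hJ1 : 1 ≤ J := by
    have := Complex.abs_re_le_norm (1 + Complex.I * α)
    simpa using this
  have hJs : 1 ≤ √J := Real.one_le_sqrt.2 hJ1
  have hz : ‖(1 / zz α ^ (1 / 2 : ℂ))‖ = 1 / (√α * √J) := by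
    rw [norm_div, norm_one, sqrt_norm, zz_eq, norm_mul, norm_mul, norm_neg, Complex.norm_I, one_mul,
      Complex.norm_real, Real.norm_eq_abs, abs_of_pos hα, Real.sqrt_mul hα.le]
  have hX2 : ‖X‖ ≤ √J * ‖R‖ + 8 := by
    have : X = (X - (∫ u, dk α u) * R) + (∫ u, dk α u) * R := by ring
    rw [this]
    refine (norm_add_le _ _).trans ?_
    rw [norm_mul, dk_int]
    linarith
  have h3 : ‖rs (qc α β) A B‖ ≤ 1 / (√α * √J) * ‖X‖ + 8 * (12 / √α) := by
    have : rs (qc α β) A B = (1 / zz α ^ (1 / 2 : ℂ)) * X - ((1 / zz α ^ (1 / 2 : ℂ)) * X - rs (qc α β) A B) := by ring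
    rw [this]
    refine (norm_sub_le _ _).trans ?_
    rw [norm_mul, hz]
    linarith
  refine h3.trans ?_
  have h4 : 1 / (√α * √J) * ‖X‖ ≤ 1 / (√α * √J) * (√J * (‖R‖ + 8)) := by
    gcongr
    nlinarith
  have h5 : 1 / (√α * √J) * (√J * (‖R‖ + 8)) = 1 / √α * (‖R‖ + 8) := by
    field_simp
  rw [h5] at h4
  have : 8 * (12 / √α) = 1 / √α * 96 := by ring
  nlinarith

lemma afe {α : ℝ} (hα : 0 < α) (hα1 : α ≤ 1) (β : ℝ) {A B : ℝ} (hAB : A ≤ B) :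
    ‖rs (qc α β) A B‖ ≤ 1 / √α * (‖rs (qc (-(1 / α)) (β / α)) (α * A + β) (α * B + β)‖ + 104) := by
  refine (afe_dc hα hα1 β hAB).trans (le_of_eq ?_)
  have : ∀ m, dc α β m = ee (-β ^ 2 / (2 * α)) * qc (-(1 / α)) (β / α) m := by
    intro m
    unfold dc qc
    rw [← ee_add]; congr 1; field_simp; ring
  have : rs (dc α β) (α * A + β) (α * B + β) = ee (-β ^ 2 / (2 * α)) * rs (qc (-(1 / α)) (β / α)) (α * A + β) (α * B + β) := by
    unfold rs; rw [Finset.mul_sum]; exact Finset.sum_congr rfl (fun m _ => this m)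
  rw [this, norm_mul, ee_norm, one_mul]

lemma qc_shift (α β : ℝ) (k n : ℤ) : qc (α + k) β n = qc α (β + k / 2) n := by
  unfold qc
  obtain ⟨l, hl⟩ := Int.even_mul_pred_self n
  have hl' : (n : ℝ) * (n - 1) = l + l := by exact_mod_cast hl
  rw [← ee_add_int (α * n ^ 2 / 2 + (β + k / 2) * n) (k * l)]
  congr 1
  push_cast
  linear_combination (k : ℝ) / 2 * hl'

lemma rs_qc_shift (α β : ℝ) (k : ℤ) (A B : ℝ) : rs (qc (α + k) β) A B = rs (qc α (β + k / 2)) A B := by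
  unfold rs; exact Finset.sum_congr rfl (fun n _ => qc_shift α β k n)

lemma rs_qc_neg (α β : ℝ) (A B : ℝ) : ‖rs (qc (-α) β) A B‖ = ‖rs (qc α (-β)) A B‖ := by
  have : rs (qc (-α) β) A B = (starRingEnd ℂ) (rs (qc α (-β)) A B) := by
    unfold rs
    rw [map_sum]
    apply Finset.sum_congr rfl
    intro n _
    unfold qc
    rw [ee_conj]; congr 1; ring
  rw [this, RCLike.norm_conj]

lemma gauss_bound (q : ℕ) : 0 < q → ∀ r : ℤ, (∀ d : ℤ, d ∣ r → d ∣ q → d ∣ 2) →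
    ∀ β A B : ℝ, A ≤ B → B - A ≤ q → ‖rs (qc ((r : ℝ) / q) β) A B‖ ≤ 419 * √q - 416 := by
  induction q using Nat.strong_induction_on with
  | _ q ih =>
  intro hq
  have hq0 : (0 : ℝ) < q := by exact_mod_cast hq
  -- the positive case
  have pos : ∀ r : ℕ, 2 * r ≤ q → (∀ d : ℤ, d ∣ r → d ∣ q → d ∣ 2) →
      ∀ β A B : ℝ, A ≤ B → B - A ≤ q → ‖rs (qc ((r : ℝ) / q) β) A B‖ ≤ 419 * √q - 416 := by
    intro r hr hd β A B hAB hl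
    rcases Nat.eq_zero_or_pos r with h0 | h0
    · have h2 : (q : ℤ) ∣ 2 := hd q (by rw [h0]; simp) dvd_rfl
      have h3 : q ≤ 2 := by have := Int.le_of_dvd (by norm_num) h2; omega
      have h4 : (q : ℝ) ≤ 2 := by exact_mod_cast h3
      have h5 : 1 ≤ √(q : ℝ) := Real.one_le_sqrt.2 (by exact_mod_cast hq)
      have := rs_card (c := qc ((r : ℝ) / q) β) (fun n => (qc_norm _ _ n).le) hAB
      linarith
    · have hr0 : (0 : ℝ) < r := by exact_mod_cast h0
      have hr2 : 2 * (r : ℝ) ≤ q := by exact_mod_cast hr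
      have hα : (0 : ℝ) < r / q := by positivity
      have hα1 : (r : ℝ) / q ≤ 1 := by rw [div_le_one hq0]; linarith
      have h1 := afe hα hα1 β hAB
      have e1 : -(1 / ((r : ℝ) / q)) = ((-(q : ℤ) : ℤ) : ℝ) / r := by push_cast; field_simp
      rw [e1] at h1
      have h2 := ih r (by omega) h0 (-(q : ℤ)) (fun d h h' => hd d h' (by simpa using h)) (β / (r / q))
        (r / q * A + β) (r / q * B + β) (by nlinarith) (by
          have : (r : ℝ) / q * B + β - (r / q * A + β) = r / q * (B - A) := by ring
          rw [this]
          calc (r : ℝ) / q * (B - A) ≤ r / q * q := by gcongr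
            _ = r := by field_simp)
      have hsr : 0 < √(r : ℝ) := Real.sqrt_pos.2 hr0
      have hsq : 0 < √(q : ℝ) := Real.sqrt_pos.2 hq0
      have e2 : 1 / √((r : ℝ) / q) = √q / √r := by
        rw [Real.sqrt_div hr0.le, one_div_div]
      rw [e2] at h1
      have h3 : 4 / 3 * √(r : ℝ) ≤ √q := by
        apply Real.le_sqrt_of_sq_le
        rw [mul_pow, Real.sq_sqrt hr0.le]
        linarith
      have h4 : 4 / 3 ≤ √(q : ℝ) / √r := by rwa [le_div_iff₀ hsr]
      have h5 : √(q : ℝ) / √r * √r = √q := by field_simp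
      have h6 : √(q : ℝ) / √r * (‖rs (qc (((-(q : ℤ) : ℤ) : ℝ) / r) (β / (r / q))) (r / q * A + β) (r / q * B + β)‖ + 104)
          ≤ √(q : ℝ) / √r * ((419 * √r - 416) + 104) := by gcongr
      nlinarith
  intro r hd β A B hAB hl
  have hdiv := Int.emod_add_mul_ediv r q
  have hs0 := Int.emod_nonneg r (show (q : ℤ) ≠ 0 by omega)
  have hs1 := Int.emod_lt_of_pos r (show (0 : ℤ) < q by omega)
  obtain ⟨s, hs⟩ := Int.eq_ofNat_of_zero_le hs0
  set k := r / (q : ℤ) with hk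
  rw [hs] at hdiv hs1
  rcases le_or_gt (2 * s) q with h | h
  · have e : (r : ℝ) / q = (s : ℝ) / q + k := by
      rw [← hdiv]; push_cast; field_simp
    rw [e, rs_qc_shift]
    apply pos s h _ _ _ _ hAB hl
    intro d h1 h2
    apply hd d _ h2
    rw [← hdiv]
    exact dvd_add h1 (h2.mul_right _)
  · obtain ⟨t, ht⟩ : ∃ t : ℕ, s + t = q := ⟨q - s, by omega⟩
    have ht' : (s : ℝ) + t = q := by exact_mod_cast ht
    have ht'' : (s : ℤ) + t = q := by exact_mod_cast ht
    have e : (r : ℝ) / q = -((t : ℝ) / q) + ((k + 1 : ℤ) : ℝ) := by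
      rw [← hdiv]; push_cast; field_simp; linarith
    rw [e, rs_qc_shift, rs_qc_neg]
    apply pos t (by omega) _ _ _ _ hAB hl
    intro d h1 h2
    apply hd d _ h2
    rw [← hdiv, show (s : ℤ) + q * k = q * (k + 1) - t by linarith]
    exact dvd_sub (h2.mul_right _) h1

/-- Abel summation against a slowly varying factor. -/
lemma abel_bound (f : ℕ → ℂ) (w : ℕ → ℂ) (hw : ∀ n, ‖w n‖ = 1) (K : ℕ) (S V : ℝ)
    (hS : ∀ k ≤ K, ‖∑ n ∈ Finset.range k, f n‖ ≤ S)
    (hV : ∀ n < K, ‖w (n + 1) - w n‖ ≤ V) :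
    ‖∑ n ∈ Finset.range K, f n * w n‖ ≤ S * (1 + K * V) := by
  have hS0 : 0 ≤ S := (norm_nonneg _).trans (hS 0 (Nat.zero_le _))
  have key : ∀ k ≤ K, ‖∑ n ∈ Finset.range k, f n * w n - (∑ n ∈ Finset.range k, f n) * w k‖ ≤ S * (k * V) := by
    intro k
    induction k with
    | zero => intro _; simp
    | succ k ih =>
      intro hk
      have ih := ih (by omega)
      have e : ∑ n ∈ Finset.range (k + 1), f n * w n - (∑ n ∈ Finset.range (k + 1), f n) * w (k + 1) =
          (∑ n ∈ Finset.range k, f n * w n - (∑ n ∈ Finset.range k, f n) * w k) -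
            (∑ n ∈ Finset.range (k + 1), f n) * (w (k + 1) - w k) := by
        simp only [Finset.sum_range_succ]; ring
      rw [e]
      refine (norm_sub_le _ _).trans ?_
      rw [norm_mul]
      have := mul_le_mul (hS (k + 1) hk) (hV k (by omega)) (norm_nonneg _) hS0
      push_cast
      linarith
  have h := key K le_rfl
  have e : ∑ n ∈ Finset.range K, f n * w n = (∑ n ∈ Finset.range K, f n * w n - (∑ n ∈ Finset.range K, f n) * w K) +
     (∑ n ∈ Finset.range K, f n) * w K := by ring
  rw [e]
  refine (norm_add_le _ _).trans ?_
  rw [norm_mul, hw, mul_one]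
  have := hS K le_rfl
  linarith

lemma block_bound (a b : ℝ) (p : ℤ) (q : ℕ) (hq : 0 < q) (hpq : Nat.Coprime p.natAbs q)
    (ha : |a - (p : ℝ) / q| ≤ 1 / (q : ℝ) ^ 2) (M K : ℕ) (hK : K ≤ q) :
    ‖∑ k ∈ Finset.range K, ee (a * ((M + k : ℕ) : ℝ) ^ 2 + b * ((M + k : ℕ) : ℝ))‖ ≤ 419 * 33 * √q := by
  have hq0 : (0 : ℝ) < q := by exact_mod_cast hq
  have hsq : 0 < √(q : ℝ) := Real.sqrt_pos.2 hq0
  set ε := a - (p : ℝ) / q with hε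
  have hd : ∀ d : ℤ, d ∣ 2 * p → d ∣ (q : ℤ) → d ∣ 2 := by
    intro d h1 h2
    have hc : IsCoprime p (q : ℤ) := by
      rw [Int.isCoprime_iff_gcd_eq_one]; simpa [Int.gcd] using hpq
    have hc2 : IsCoprime d p := (hc.symm.of_isCoprime_of_dvd_left h2)
    exact hc2.dvd_of_dvd_mul_right h1
  set β := b + 2 * ε * M with hβ
  have hS : ∀ k ≤ K, ‖∑ n ∈ Finset.range k, qc (((2 * p : ℤ) : ℝ) / q) β ((M : ℤ) - 1 + 1 + n)‖ ≤ 419 * √q := by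
    intro k hk
    have h1 := gauss_bound q hq (2 * p) hd β (((M : ℤ) - 1 : ℤ) : ℝ) (((M : ℤ) - 1 + k : ℤ) : ℝ)
      (by push_cast; linarith [Nat.cast_nonneg (α := ℝ) k])
      (by
        have : (k : ℝ) ≤ q := by exact_mod_cast hk.trans hK
        push_cast; linarith)
    unfold rs at h1
    rw [Int.floor_intCast, Int.floor_intCast, sum_Ioc_range] at h1
    rw [show ((M : ℤ) - 1 + k - (M - 1)).toNat = k by omega] at h1
    linarith
  have hV : ∀ n < K, ‖ee (ε * ((n + 1 : ℕ) : ℝ) ^ 2) - ee (ε * (n : ℝ) ^ 2)‖ ≤ 16 / q := by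
    intro n hn
    refine (ee_sub_norm _ _).trans ?_
    have h1 : ε * ((n + 1 : ℕ) : ℝ) ^ 2 - ε * (n : ℝ) ^ 2 = ε * (2 * n + 1) := by push_cast; ring
    have h2 : 2 * (n : ℝ) + 1 ≤ 2 * q := by
      have : (n : ℝ) + 1 ≤ q := by exact_mod_cast (show n + 1 ≤ q by omega)
      linarith
    rw [h1, abs_mul, abs_of_nonneg (a := 2 * (n : ℝ) + 1) (by positivity)]
    calc 2 * π * (|ε| * (2 * n + 1)) ≤ 2 * 4 * (1 / (q : ℝ) ^ 2 * (2 * q)) := by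
          gcongr
          exact Real.pi_le_four
      _ = 16 / q := by field_simp; norm_num
  have h := abel_bound (fun n => qc (((2 * p : ℤ) : ℝ) / q) β ((M : ℤ) - 1 + 1 + n))
    (fun n => ee (ε * (n : ℝ) ^ 2)) (fun n => ee_norm _) K (419 * √q) (16 / q) hS hV
  have e : ∑ k ∈ Finset.range K, ee (a * ((M + k : ℕ) : ℝ) ^ 2 + b * ((M + k : ℕ) : ℝ)) =
      ee (-ε * (M : ℝ) ^ 2) * ∑ n ∈ Finset.range K,
        qc (((2 * p : ℤ) : ℝ) / q) β ((M : ℤ) - 1 + 1 + n) * ee (ε * (n : ℝ) ^ 2) := by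
    rw [Finset.mul_sum]
    apply Finset.sum_congr rfl
    intro n _
    unfold qc
    rw [← ee_add, ← ee_add]
    congr 1
    have : a = p / q + ε := by rw [hε]; ring
    rw [this, hβ]
    push_cast
    ring
  rw [e, norm_mul, ee_norm, one_mul]
  refine h.trans ?_
  have hKq : (K : ℝ) * (16 / q) ≤ 16 := by
    rw [mul_div_assoc', div_le_iff₀ hq0]
    have : (K : ℝ) ≤ q := by exact_mod_cast hK
    linarith
  nlinarith

lemma multi_bound (a b : ℝ) (p : ℤ) (q : ℕ) (hq : 0 < q) (hpq : Nat.Coprime p.natAbs q)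
    (ha : |a - (p : ℝ) / q| ≤ 1 / (q : ℝ) ^ 2) (j : ℕ) : ∀ (M K : ℕ), K ≤ j * q →
    ‖∑ k ∈ Finset.range K, ee (a * ((M + k : ℕ) : ℝ) ^ 2 + b * ((M + k : ℕ) : ℝ))‖ ≤ j * (419 * 33 * √q) := by
  induction j with
  | zero =>
    intro M K hK
    have : K = 0 := by omega
    subst this; simp
  | succ j ih =>
    intro M K hK
    have hnn : 0 ≤ (j : ℝ) * (419 * 33 * √q) := by positivity
    rw [Nat.cast_succ]
    rcases le_total K q with h | h
    · have := block_bound a b p q hq hpq ha M K h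
      linarith
    · obtain ⟨L, rfl⟩ := Nat.exists_eq_add_of_le h
      rw [Finset.sum_range_add]
      refine (norm_add_le _ _).trans ?_
      have h1 := block_bound a b p q hq hpq ha M q le_rfl
      have h2 := ih (M + q) L (by rw [add_mul] at hK; omega)
      simp only [← add_assoc]
      linarith

/-- (Weyl-sum estimate.) There is an absolute constant `c₁ > 0` such that for
every real `a`, every irreducible fraction `p/q` with `q ≥ 1` and `|a - p/q| ≤ 1/q²`, every
`b ∈ ℝ` and all integers `0 < M < N`,
`|Σ_{n=M}^{N} e^{2πi(an² + bn)}| ≤ c₁((N-M)/√q + √q)`. -/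
theorem weyl_sum_estimate :
    ∃ c₁ : ℝ, 0 < c₁ ∧
      ∀ (a b : ℝ) (p : ℤ) (q : ℕ), 0 < q → Nat.Coprime p.natAbs q →
        |a - (p : ℝ) / q| ≤ 1 / (q : ℝ) ^ 2 →
        ∀ M N : ℕ, 0 < M → M < N →
          ‖∑ n ∈ Icc M N, Complex.exp (2 * π * Complex.I * (a * n ^ 2 + b * n))‖ ≤
            c₁ * (((N : ℝ) - M) / Real.sqrt q + Real.sqrt q) := by
  refine ⟨2 * (419 * 33), by norm_num, ?_⟩
  intro a b p q hq hpq ha M N _ hMN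
  have hq0 : (0 : ℝ) < q := by exact_mod_cast hq
  have hsq : 0 < √(q : ℝ) := Real.sqrt_pos.2 hq0
  have hss : √(q : ℝ) * √q = q := Real.mul_self_sqrt hq0.le
  obtain ⟨L, rfl⟩ := Nat.exists_eq_add_of_le hMN.le
  have e : ∑ n ∈ Icc M (M + L), Complex.exp (2 * π * Complex.I * (a * n ^ 2 + b * n)) =
      ∑ k ∈ Finset.range (L + 1), ee (a * ((M + k : ℕ) : ℝ) ^ 2 + b * ((M + k : ℕ) : ℝ)) := by
    rw [← Finset.Ico_add_one_right_eq_Icc, Finset.sum_Ico_eq_sum_range]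
    rw [show M + L + 1 - M = L + 1 by omega]
    apply Finset.sum_congr rfl
    intro k _
    unfold ee
    congr 1
    push_cast
    ring
  rw [e]
  have hj : L + 1 ≤ (L / q + 1) * q := by
    have := Nat.lt_div_mul_add (a := L) hq
    rw [add_mul]; omega
  refine (multi_bound a b p q hq hpq ha (L / q + 1) M (L + 1) hj).trans ?_
  have h1 : ((L / q : ℕ) : ℝ) ≤ (L : ℝ) / q := Nat.cast_div_le
  have h2 : (L : ℝ) / q * √q = L / √q := by
    rw [div_mul_eq_mul_div, div_eq_div_iff hq0.ne' hsq.ne', mul_assoc, hss]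
  have h3 : ((L / q : ℕ) : ℝ) * √q ≤ (L : ℝ) / q * √q := by gcongr
  have h4 : 0 ≤ (L : ℝ) / √q := by positivity
  push_cast
  rw [add_sub_cancel_left]
  nlinarith
end

section
/- Suppose a > 0 is real and there exists c₁ > 0 and, for every real δ > 0, a sequence of irreducible fractions p_j/q_j with |a - p_j/q_j| ≤ 1/q_j² and 2^{j(1-δ)} ≤ q_j ≤ 2^{j(1+δ)} for all sufficiently large j. Then, with t = 2πa, for each δ > 0 there exists C > 0 such that sup_{x∈ℝ} |Σ_{n=2^{j-1}}^{2^{j+1}} χ_j(n) e^{in²t + inx}| ≤ C · 2^{(j/2)(1+δ)} for all j ≥ 1, where χ_j(ξ) = χ(2^{-j}ξ) and χ : ℝ → [0,1] is a fixed smooth function supported in [1/2, 2]. -/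
open Real Finset Set

lemma lp_abel (w z : ℕ → ℂ) (M : ℕ) :
    ∑ n ∈ range M, w n * z n = w M * ∑ n ∈ range M, z n
      - ∑ n ∈ range M, (w (n+1) - w n) * ∑ k ∈ range (n+1), z k := by
  induction M with
  | zero => simp
  | succ M ih =>
    rw [sum_range_succ, ih, sum_range_succ (fun n => (w (n+1) - w n) * _), sum_range_succ z M]
    ring

lemma lp_geom (y : ℝ) (K : ℕ) :
    ‖∑ n ∈ range K, Complex.exp (2 * π * y * Complex.I * n)‖
      * (2 * min (Int.fract y) (1 - Int.fract y)) ≤ 1 := by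
  set f := Int.fract y with hf
  have hf0 : 0 ≤ f := Int.fract_nonneg y
  have hf1 : f < 1 := Int.fract_lt_one y
  set r : ℂ := Complex.exp (Complex.I * ((2 * π * f : ℝ) : ℂ)) with hr
  have hterm : ∀ n : ℕ, Complex.exp (2 * π * y * Complex.I * n) = r ^ n := by
    intro n
    rw [hr, ← Complex.exp_nat_mul]
    have : (y : ℂ) = f + (⌊y⌋ : ℤ) := by
      have := Int.fract_add_floor y
      rw [← hf] at this
      exact_mod_cast this.symm
    rw [this]
    rw [Complex.exp_eq_exp_iff_exists_int]
    refine ⟨⌊y⌋ * n, ?_⟩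
    push_cast
    ring
  simp_rw [hterm]
  have hrn : ‖r‖ = 1 := by
    rw [hr, mul_comm]; exact Complex.norm_exp_ofReal_mul_I _
  have h1 : (∑ n ∈ range K, r ^ n) * (r - 1) = r ^ K - 1 := geom_sum_mul r K
  have h2 : ‖r ^ K - 1‖ ≤ 2 := by
    calc ‖r ^ K - 1‖ ≤ ‖r ^ K‖ + ‖(1:ℂ)‖ := norm_sub_le _ _
      _ = 2 := by rw [norm_pow, hrn]; norm_num
  have h3 : 2 * (2 * min f (1 - f)) ≤ ‖r - 1‖ := by
    rw [hr, Complex.norm_exp_I_mul_ofReal_sub_one]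
    have e : 2 * π * f / 2 = π * f := by ring
    rw [e, Real.norm_eq_abs]
    refine le_trans ?_ (le_abs_self _)
    have hpi := Real.pi_pos
    have : 2 * min f (1 - f) ≤ Real.sin (π * f) := by
      rcases le_total f (1 - f) with h | h
      · rw [min_eq_left h]
        have := Real.mul_le_sin (x := π * f) (by positivity) (by nlinarith)
        calc 2 * f = 2 / π * (π * f) := by field_simp
          _ ≤ _ := this
      · rw [min_eq_right h]
        have := Real.mul_le_sin (x := π * (1 - f)) (by apply mul_nonneg hpi.le; linarith) (by nlinarith)
        have e2 : Real.sin (π * (1 - f)) = Real.sin (π * f) := by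
          rw [← Real.sin_pi_sub]; congr 1; ring
        rw [e2] at this
        calc 2 * (1 - f) = 2 / π * (π * (1 - f)) := by field_simp
          _ ≤ _ := this
    linarith
  have h4 : ‖∑ n ∈ range K, r ^ n‖ * ‖r - 1‖ ≤ 2 := by rw [← norm_mul, h1]; exact h2
  have h5 := mul_le_mul_of_nonneg_left h3 (norm_nonneg (∑ n ∈ range K, r ^ n))
  linarith

lemma lp_normSq (z : ℕ → ℂ) (M : ℕ) (hz : ∀ n, ‖z n‖ = 1) :
    ‖∑ n ∈ range M, z n‖ ^ 2 = M + 2 * (∑ h ∈ range M, ∑ n ∈ range (M - 1 - h),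
      z (n + h + 1) * (starRingEnd ℂ) (z n)).re := by
  induction M with
  | zero => simp
  | succ M ih =>
    have e1 : ∑ h ∈ range (M+1), ∑ n ∈ range (M + 1 - 1 - h),
        z (n + h + 1) * (starRingEnd ℂ) (z n) =
        (∑ h ∈ range M, ∑ n ∈ range (M - 1 - h), z (n + h + 1) * (starRingEnd ℂ) (z n))
          + z M * (starRingEnd ℂ) (∑ n ∈ range M, z n) := by
      rw [sum_range_succ]
      simp only [Nat.add_sub_cancel, Nat.sub_self, range_zero, sum_empty, add_zero]
      rw [← Finset.sum_range_reflect z M, map_sum, mul_sum, ← sum_add_distrib]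
      apply sum_congr rfl
      intro h hh
      have hh' := Finset.mem_range.1 hh
      have : M - h = (M - 1 - h) + 1 := by omega
      rw [this, sum_range_succ]
      congr 3
      omega
    rw [e1, sum_range_succ, Complex.sq_norm, Complex.normSq_add, ← Complex.sq_norm,
      ← Complex.sq_norm, ih, hz]
    have e2 : ((∑ n ∈ range M, z n) * (starRingEnd ℂ) (z M)).re
        = (z M * (starRingEnd ℂ) (∑ n ∈ range M, z n)).re := by
      simp only [Complex.mul_re, Complex.conj_re, Complex.conj_im]; ring
    rw [e2, Complex.add_re]
    push_cast
    ring

noncomputable def lpG (M q m : ℕ) : ℝ := if m = 0 then M else (q : ℝ) / m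
noncomputable def lpPhi (a : ℝ) (q k : ℕ) : ℕ := ⌊2 * (q : ℝ) * Int.fract (a * k)⌋₊
noncomputable def lpF (a : ℝ) (M q k : ℕ) : ℝ :=
  lpG M q (lpPhi a q k) + lpG M q (2 * q - 1 - lpPhi a q k)

lemma lpG_nonneg (M q m : ℕ) : 0 ≤ lpG M q m := by
  unfold lpG; split_ifs <;> positivity

lemma lpF_nonneg (a : ℝ) (M q m : ℕ) : 0 ≤ lpF a M q m :=
  add_nonneg (lpG_nonneg ..) (lpG_nonneg ..)

lemma lpPhi_lt (a : ℝ) (q k : ℕ) (hq : 0 < q) : lpPhi a q k < 2 * q := by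
  unfold lpPhi
  have hq' : (0:ℝ) < q := by exact_mod_cast hq
  rw [Nat.floor_lt (mul_nonneg (by positivity) (Int.fract_nonneg _))]
  push_cast
  have := Int.fract_lt_one (a * k)
  nlinarith

lemma lp_geom_le (a : ℝ) (M q k K : ℕ) (hq : 0 < q) (hK : K ≤ M) :
    ‖∑ n ∈ range K, Complex.exp (2 * π * (a * k : ℝ) * Complex.I * n)‖ ≤ lpF a M q k := by
  have htriv : ‖∑ n ∈ range K, Complex.exp (2 * π * (a * k : ℝ) * Complex.I * n)‖ ≤ M := by
    refine (norm_sum_le _ _).trans ?_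
    have : ∀ n ∈ range K, ‖Complex.exp (2 * π * (a * k : ℝ) * Complex.I * n)‖ = 1 := by
      intro n _
      have : (2 * π * (a * k : ℝ) * Complex.I * n : ℂ) = ((2 * π * (a * k) * n : ℝ) : ℂ) * Complex.I := by
        push_cast; ring
      rw [this]; exact Complex.norm_exp_ofReal_mul_I _
    rw [sum_congr rfl this]
    simpa using hK
  have hlt := lpPhi_lt a q k hq
  have hg := lp_geom (a * k) K
  set T := ‖∑ n ∈ range K, Complex.exp (2 * π * (a * k : ℝ) * Complex.I * n)‖
  have hT0 : 0 ≤ T := norm_nonneg _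
  unfold lpF
  have hq' : (0:ℝ) < q := by exact_mod_cast hq
  set m := lpPhi a q k with hm
  set f := Int.fract (a * k) with hf
  have hf0 : 0 ≤ f := Int.fract_nonneg _
  have hm1 : (m : ℝ) ≤ 2 * q * f := Nat.floor_le (by positivity)
  have hm2 : 2 * q * f < m + 1 := Nat.lt_floor_add_one _
  have n1 := lpG_nonneg M q m
  have n2 := lpG_nonneg M q (2 * q - 1 - m)
  by_cases h1 : m = 0
  · have : lpG M q m = M := by simp [lpG, h1]
    linarith
  by_cases h2 : 2 * q - 1 - m = 0
  · have : lpG M q (2 * q - 1 - m) = M := by simp [lpG, h2]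
    linarith
  rcases le_total f (1 - f) with h | h
  · rw [min_eq_left h] at hg
    have : lpG M q m = q / m := by simp [lpG, h1]
    have hm0 : (0:ℝ) < m := by exact_mod_cast Nat.pos_of_ne_zero h1
    have : T ≤ lpG M q m := by
      rw [this, le_div_iff₀ hm0]
      nlinarith
    linarith
  · rw [min_eq_right h] at hg
    set m' := 2 * q - 1 - m with hm'
    have hmm : m' + m + 1 = 2 * q := by omega
    have hmm' : (m' : ℝ) + m + 1 = 2 * q := by exact_mod_cast hmm
    have : lpG M q m' = q / m' := by simp [lpG, h2]
    have hm0 : (0:ℝ) < m' := by exact_mod_cast Nat.pos_of_ne_zero h2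
    have : T ≤ lpG M q m' := by
      rw [this, le_div_iff₀ hm0]
      have : (m' : ℝ) ≤ 2 * q * (1 - f) := by linarith
      nlinarith
    linarith

lemma lpPhi_inj (a : ℝ) (p q : ℕ) (hq : 0 < q) (hpq : Nat.Coprime p q)
    (hap : |a - (p : ℝ) / q| ≤ 1 / (q : ℝ) ^ 2) (k k' : ℕ)
    (hd : 2 * |(k : ℤ) - k'| < q) (h : lpPhi a q k = lpPhi a q k') : k = k' := by
  have hq' : (0:ℝ) < q := by exact_mod_cast hq
  set d : ℤ := (k : ℤ) - k' with hdd
  set z : ℤ := ⌊a * k⌋ - ⌊a * k'⌋ with hz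
  have hfr : Int.fract (a * k) - Int.fract (a * k') = a * d - z := by
    rw [hz, hdd, Int.fract, Int.fract]; push_cast; ring
  have b1 : |2 * q * (a * d - z)| < 1 := by
    rw [← hfr]
    have u1 : (lpPhi a q k : ℝ) ≤ 2 * q * Int.fract (a * k) :=
      Nat.floor_le (mul_nonneg (by positivity) (Int.fract_nonneg _))
    have u2 : 2 * q * Int.fract (a * k) < lpPhi a q k + 1 := Nat.lt_floor_add_one _
    have u3 : (lpPhi a q k' : ℝ) ≤ 2 * q * Int.fract (a * k') :=
      Nat.floor_le (mul_nonneg (by positivity) (Int.fract_nonneg _))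
    have u4 : 2 * q * Int.fract (a * k') < lpPhi a q k' + 1 := Nat.lt_floor_add_one _
    rw [h] at u1 u2
    rw [abs_lt]
    constructor <;> linarith
  have hd' : 2 * |(d : ℝ)| < q := by exact_mod_cast hd
  have b2 : |2 * q * d * (a - p / q)| ≤ 1 := by
    rw [abs_mul, abs_mul, abs_of_pos (by positivity : (0:ℝ) < 2 * q)]
    calc 2 * q * |(d:ℝ)| * |a - p / q| ≤ (q * q) * (1 / (q:ℝ)^2) := by
          apply mul_le_mul _ hap (abs_nonneg _) (by positivity)
          nlinarith
      _ = 1 := by field_simp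
  have b3 : |(2 * (p * d - z * q) : ℝ)| < 2 := by
    have : (2 * (p * d - z * q) : ℝ) = 2 * q * (a * d - z) - 2 * q * d * (a - p / q) := by
      field_simp; ring
    rw [this]
    rw [abs_lt] at b1 ⊢
    rw [abs_le] at b2
    constructor <;> linarith
  have b4 : (p : ℤ) * d - z * q = 0 := by
    have : |(2 * ((p : ℤ) * d - z * q))| < 2 := by exact_mod_cast b3
    rw [abs_lt] at this
    omega
  have b5 : (q : ℤ) ∣ d := by
    have : (q : ℤ) ∣ p * d := ⟨z, by linarith⟩
    refine IsCoprime.dvd_of_dvd_mul_left ?_ this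
    exact (Nat.isCoprime_iff_coprime.2 hpq).symm
  have b6 : d = 0 := by
    apply Int.eq_zero_of_abs_lt_dvd b5
    have := abs_nonneg d
    omega
  omega

lemma lpG_sum (M q : ℕ) (hq : 0 < q) :
    ∑ m ∈ range (2 * q), lpG M q m ≤ M + q * (1 + Real.log (2 * q)) := by
  obtain ⟨s, hs⟩ : ∃ s, 2 * q = s + 1 := ⟨2 * q - 1, by omega⟩
  have h1 : ∑ m ∈ range s, lpG M q (m+1) = q * (harmonic s : ℝ) := by
    rw [harmonic]; push_cast; rw [mul_sum]
    apply sum_congr rfl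
    intro m _
    simp [lpG, div_eq_mul_inv]
  have hH := harmonic_le_one_add_log s
  rw [hs, sum_range_succ', h1]
  have h2 : lpG M q 0 = M := by simp [lpG]
  have hlog : Real.log s ≤ Real.log (2 * q) := by
    have : (2 * q : ℝ) = s + 1 := by exact_mod_cast hs
    rw [this]
    rcases Nat.eq_zero_or_pos s with h0 | h0
    · subst h0; simp
    · apply Real.log_le_log (by exact_mod_cast h0); linarith
  rw [h2]
  have : (q:ℝ) * harmonic s ≤ q * (1 + Real.log (2 * q)) := by
    apply mul_le_mul_of_nonneg_left _ (by positivity)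
    linarith
  linarith

lemma lp_block (a : ℝ) (M p q L : ℕ) (hq : 0 < q) (hpq : Nat.Coprime p q)
    (hap : |a - (p : ℝ) / q| ≤ 1 / (q : ℝ) ^ 2) (hL : 2 * L ≤ q + 1) (k0 : ℕ) :
    ∑ r ∈ range L, lpF a M q (k0 + r) ≤ 2 * (M + q * (1 + Real.log (2 * q))) := by
  have hinj : Set.InjOn (fun r => lpPhi a q (k0 + r)) (Finset.range L : Set ℕ) := by
    intro r hr r' hr' h
    have h1 : r < L := by simpa using hr
    have h2 : r' < L := by simpa using hr'
    have := lpPhi_inj a p q hq hpq hap (k0 + r) (k0 + r') (by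
      push_cast
      rcases abs_cases ((k0:ℤ) + r - (k0 + r')) with h | h <;> omega) h
    omega
  calc ∑ r ∈ range L, lpF a M q (k0 + r)
      = ∑ m ∈ (range L).image (fun r => lpPhi a q (k0 + r)),
          (lpG M q m + lpG M q (2 * q - 1 - m)) := by
        rw [sum_image hinj]; rfl
    _ ≤ ∑ m ∈ range (2 * q), (lpG M q m + lpG M q (2 * q - 1 - m)) := by
        apply sum_le_sum_of_subset_of_nonneg
        · intro m hm
          obtain ⟨r, _, rfl⟩ := Finset.mem_image.1 hm
          exact Finset.mem_range.2 (lpPhi_lt a q _ hq)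
        · intro i _ _
          exact add_nonneg (lpG_nonneg ..) (lpG_nonneg ..)
    _ = 2 * ∑ m ∈ range (2 * q), lpG M q m := by
        rw [sum_add_distrib, sum_range_reflect]; ring
    _ ≤ _ := by
        have := lpG_sum M q hq
        linarith

lemma lp_total (a : ℝ) (M p q : ℕ) (hq : 0 < q) (hpq : Nat.Coprime p q)
    (hap : |a - (p : ℝ) / q| ≤ 1 / (q : ℝ) ^ 2) :
    ∑ h ∈ range M, lpF a M q (2 * (h + 1)) ≤
      (2 * (2 * M + 1) / q + 1) * (2 * (M + q * (1 + Real.log (2 * q)))) := by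
  set X : ℝ := 2 * (M + q * (1 + Real.log (2 * q))) with hX
  set L := (q + 1) / 2 with hL
  have hL0 : 0 < L := by omega
  have hB : ∀ B : ℕ, ∑ k ∈ range (B * L), lpF a M q k ≤ B * X := by
    intro B
    induction B with
    | zero => simp
    | succ B ih =>
      rw [Nat.succ_mul, sum_range_add]
      have := lp_block a M p q L hq hpq hap (by omega) (B * L)
      push_cast
      linarith
  have hq' : (0:ℝ) < q := by exact_mod_cast hq
  have hX0 : 0 ≤ X := by
    have : 0 ≤ Real.log (2 * q) := Real.log_nonneg (by
      have : (1:ℝ) ≤ q := by exact_mod_cast hq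
      linarith)
    positivity
  set B := (2 * M + 1) / L + 1 with hBdef
  have hBL : 2 * M + 1 ≤ B * L := by
    have := Nat.lt_div_mul_add (a := 2 * M + 1) hL0
    rw [hBdef, Nat.add_mul, one_mul]; omega
  calc ∑ h ∈ range M, lpF a M q (2 * (h + 1))
      = ∑ k ∈ (range M).image (fun h => 2 * (h + 1)), lpF a M q k := by
        rw [sum_image]; intro x _ y _ h; simp at h; omega
    _ ≤ ∑ k ∈ range (B * L), lpF a M q k := by
        apply sum_le_sum_of_subset_of_nonneg
        · intro k hk
          obtain ⟨h, hh, rfl⟩ := Finset.mem_image.1 hk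
          have := Finset.mem_range.1 hh
          apply Finset.mem_range.2; omega
        · intro i _ _; exact lpF_nonneg ..
    _ ≤ B * X := hB B
    _ ≤ _ := by
        apply mul_le_mul_of_nonneg_right _ hX0
        rw [hBdef]; push_cast
        have h1 : (((2 * M + 1) / L : ℕ) : ℝ) ≤ (2 * M + 1 : ℕ) / (L : ℝ) := Nat.cast_div_le
        have h2 : (q : ℝ) ≤ 2 * L := by
          have : q ≤ 2 * L := by omega
          exact_mod_cast this
        have hL' : (0:ℝ) < L := by exact_mod_cast hL0
        have h3 : ((2 * M + 1 : ℕ) : ℝ) / (L : ℝ) ≤ 2 * (2 * M + 1) / q := by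
          rw [div_le_div_iff₀ hL' hq']; push_cast
          have : (0:ℝ) ≤ 2 * M + 1 := by positivity
          nlinarith
        linarith

lemma lp_weyl (a t x : ℝ) (A M m p q : ℕ) (hm : m ≤ M) (ht : t = 2 * π * a)
    (hq : 0 < q) (hpq : Nat.Coprime p q)
    (hap : |a - (p : ℝ) / q| ≤ 1 / (q : ℝ) ^ 2) :
    ‖∑ n ∈ range m, Complex.exp (Complex.I * ((A + n : ℕ) : ℂ) ^ 2 * t
        + Complex.I * ((A + n : ℕ) : ℂ) * x)‖ ^ 2 ≤
      M + 4 * ((2 * (2 * M + 1) / q + 1) * (M + q * (1 + Real.log (2 * q)))) := by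
  set z : ℕ → ℂ := fun n => Complex.exp (Complex.I * ((A + n : ℕ) : ℂ) ^ 2 * t
        + Complex.I * ((A + n : ℕ) : ℂ) * x) with hz
  have hzz : ∀ n, z n = Complex.exp ((((A + n : ℕ) : ℝ) ^ 2 * t + ((A + n : ℕ) : ℝ) * x : ℝ) * Complex.I) := by
    intro n; simp only [hz]; congr 1; push_cast; ring
  have hz1 : ∀ n, ‖z n‖ = 1 := by
    intro n; rw [hzz]; exact Complex.norm_exp_ofReal_mul_I _
  have hcorr : ∀ h n, z (n + h + 1) * (starRingEnd ℂ) (z n) =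
      Complex.exp (((h + 1 : ℝ) ^ 2 * t + 2 * A * (h + 1) * t + (h + 1) * x : ℝ) * Complex.I)
        * Complex.exp (2 * π * (a * ((2 * (h + 1) : ℕ) : ℝ) : ℝ) * Complex.I * n) := by
    intro h n
    rw [hzz, hzz, ← Complex.exp_conj, ← Complex.exp_add, ← Complex.exp_add, map_mul,
      Complex.conj_I, Complex.conj_ofReal]
    congr 1
    rw [ht]; push_cast; ring
  rw [lp_normSq z m hz1]
  have h1 : (∑ h ∈ range m, ∑ n ∈ range (m - 1 - h), z (n + h + 1) * (starRingEnd ℂ) (z n)).re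
      ≤ ∑ h ∈ range M, lpF a M q (2 * (h + 1)) := by
    refine (Complex.re_le_norm _).trans ((norm_sum_le _ _).trans ?_)
    calc _ ≤ ∑ h ∈ range m, lpF a M q (2 * (h + 1)) := by
          apply sum_le_sum
          intro h _
          simp_rw [hcorr]
          rw [← mul_sum, norm_mul, Complex.norm_exp_ofReal_mul_I, one_mul]
          exact lp_geom_le a M q (2 * (h + 1)) _ hq (by omega)
      _ ≤ _ := by
          apply sum_le_sum_of_subset_of_nonneg
          · intro i hi; simp at hi ⊢; omega
          · intro i _ _; exact lpF_nonneg ..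
  have h2 := lp_total a M p q hq hpq hap
  have h3 : (m : ℝ) ≤ M := by exact_mod_cast hm
  linarith

lemma lp_weighted (w : ℕ → ℝ) (z : ℕ → ℂ) (M : ℕ) (R V : ℝ)
    (hw : |w M| ≤ 1) (hV : ∀ n < M, |w (n + 1) - w n| ≤ V)
    (hR : ∀ m ≤ M, ‖∑ n ∈ range m, z n‖ ≤ R) :
    ‖∑ n ∈ range M, (w n : ℂ) * z n‖ ≤ (1 + M * V) * R := by
  rw [lp_abel (fun n => (w n : ℂ)) z M]
  have hR0 : 0 ≤ R := (norm_nonneg _).trans (hR 0 (Nat.zero_le _))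
  refine (norm_sub_le _ _).trans ?_
  have h1 : ‖(w M : ℂ) * ∑ n ∈ range M, z n‖ ≤ 1 * R := by
    rw [norm_mul, Complex.norm_real, Real.norm_eq_abs]
    exact mul_le_mul hw (hR M le_rfl) (norm_nonneg _) zero_le_one
  have h2 : ‖∑ n ∈ range M, ((w (n+1) : ℂ) - w n) * ∑ k ∈ range (n+1), z k‖ ≤ M * (V * R) := by
    refine (norm_sum_le _ _).trans ?_
    calc _ ≤ ∑ n ∈ range M, V * R := by
          apply sum_le_sum
          intro n hn
          have hn' := Finset.mem_range.1 hn
          rw [norm_mul, ← Complex.ofReal_sub, Complex.norm_real, Real.norm_eq_abs]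
          exact mul_le_mul (hV n hn') (hR _ hn') (norm_nonneg _) ((abs_nonneg _).trans (hV n hn'))
      _ = _ := by simp
  linarith

lemma lp_size (ε : ℝ) (hε : 0 < ε) (j M q : ℕ) (hq : 0 < q)
    (hM : (M : ℝ) ≤ 2 * (2:ℝ) ^ (j : ℝ))
    (h1 : (2 : ℝ) ^ ((j : ℝ) * (1 - ε)) ≤ q) (h2 : (q : ℝ) ≤ (2 : ℝ) ^ ((j : ℝ) * (1 + ε))) :
    (M : ℝ) + 4 * ((2 * (2 * M + 1) / q + 1) * (M + q * (1 + Real.log (2 * q)))) ≤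
      (2 + 44 * (4 + (1 + ε) * (2 / ε))) * (2 : ℝ) ^ ((j : ℝ) * (1 + 3 * ε)) := by
  set N : ℝ := (2:ℝ) ^ (j : ℝ) with hN
  set W : ℝ := (2:ℝ) ^ (j * ε : ℝ) with hW
  set c : ℝ := 2 + (1 + ε) * (2 / ε) with hc
  have hq' : (0:ℝ) < q := by exact_mod_cast hq
  have hq1 : (1:ℝ) ≤ q := by exact_mod_cast hq
  have hN1 : 1 ≤ N := Real.one_le_rpow (by norm_num) (by positivity)
  have hW1 : 1 ≤ W := Real.one_le_rpow (by norm_num) (by positivity)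
  have e1 : (2 : ℝ) ^ ((j : ℝ) * (1 + 3 * ε)) = N * W ^ 3 := by
    rw [hN, hW, ← Real.rpow_natCast, ← Real.rpow_mul (by norm_num), ← Real.rpow_add (by norm_num)]
    congr 1; push_cast; ring
  have e2 : N ≤ q * W := by
    calc N = (2 : ℝ) ^ ((j : ℝ) * (1 - ε)) * W := by
          rw [hN, hW, ← Real.rpow_add (by norm_num)]; congr 1; ring
      _ ≤ q * W := mul_le_mul_of_nonneg_right h1 (by positivity)
  have e3 : (q:ℝ) ≤ N * W := by
    refine h2.trans_eq ?_
    rw [hN, hW, ← Real.rpow_add (by norm_num)]; congr 1; ring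
  have hl2 : Real.log 2 ≤ 1 := by have := Real.log_two_lt_d9; linarith
  have hl2' : 1 / 2 ≤ Real.log 2 := by have := Real.log_two_gt_d9; linarith
  have hj : (j : ℝ) ≤ 2 / ε * W := by
    have : Real.log 2 * (j * ε) + 1 ≤ W := by
      rw [hW, Real.rpow_def_of_pos (by norm_num)]
      exact Real.add_one_le_exp _
    have h0 : (0:ℝ) ≤ j * ε := by positivity
    rw [div_mul_eq_mul_div, le_div_iff₀ hε]
    nlinarith
  have e4 : 1 + Real.log (2 * q) ≤ c * W := by
    rw [Real.log_mul (by norm_num) (by positivity)]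
    have : Real.log q ≤ j * (1 + ε) * Real.log 2 := by
      rw [← Real.log_rpow (by norm_num)]
      exact Real.log_le_log hq' h2
    have h5 : (j * (1 + ε)) * Real.log 2 ≤ (j * (1 + ε)) * 1 :=
      mul_le_mul_of_nonneg_left hl2 (by positivity)
    have h6 : (j : ℝ) * (1 + ε) ≤ 2 / ε * W * (1 + ε) :=
      mul_le_mul_of_nonneg_right hj (by positivity)
    have : c * W = 2 * W + 2 / ε * W * (1 + ε) := by rw [hc]; ring
    linarith
  have e5 : 2 * (2 * (M:ℝ) + 1) / q ≤ 10 * W := by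
    rw [div_le_iff₀ hq']
    nlinarith
  have hc0 : 0 < c := by positivity
  have hlog : 0 ≤ Real.log (2 * q) := Real.log_nonneg (by linarith)
  have e6 : (q:ℝ) * (1 + Real.log (2 * q)) ≤ (N * W) * (c * W) :=
    mul_le_mul e3 e4 (by positivity) (by positivity)
  have hW2 : 1 ≤ W ^ 2 := one_le_pow₀ hW1
  have hW3 : 1 ≤ W ^ 3 := one_le_pow₀ hW1
  have e7 : (M:ℝ) + q * (1 + Real.log (2 * q)) ≤ (2 + c) * (N * W ^ 2) := by
    have : N * 1 ≤ N * W ^ 2 := mul_le_mul_of_nonneg_left hW2 (by linarith)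
    nlinarith
  have e8 : (2 * (2 * (M:ℝ) + 1) / q + 1) * (M + q * (1 + Real.log (2 * q))) ≤
      (11 * W) * ((2 + c) * (N * W ^ 2)) :=
    mul_le_mul (by linarith) e7 (by positivity) (by positivity)
  have e9 : N * 1 ≤ N * W ^ 3 := mul_le_mul_of_nonneg_left hW3 (by linarith)
  rw [e1]
  have : 4 + (1 + ε) * (2 / ε) = 2 + c := by rw [hc]; ring
  rw [this]
  nlinarith

/-- Let `χ : ℝ → [0,1]` be a fixed smooth bump with support `[1/2, 2]` giving
a dyadic partition of unity, and let `a > 0` admit, for every `δ > 0`, rational approximations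
`p_j/q_j` in lowest terms with `|a - p_j/q_j| ≤ 1/q_j²` and `2^{j(1-δ)} ≤ q_j ≤ 2^{j(1+δ)}` for
all large `j`. Then, for `t = 2πa` and each `δ > 0`, there is `C > 0` with
`sup_x |Σ_{n=2^{j-1}}^{2^{j+1}} χ(2^{-j}n) e^{in²t + inx}| ≤ C·2^{(j/2)(1+δ)}` for all `j ≥ 1`. -/
theorem littlewood_paley_block_estimate (χ : ℝ → ℝ)
    (hχ : ContDiff ℝ (⊤ : ℕ∞) χ) (hχ01 : ∀ ξ, χ ξ ∈ Icc (0 : ℝ) 1)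
    (hχsupp : tsupport χ = Icc (1 / 2 : ℝ) 2)
    (hχsum : ∀ ξ : ℝ, 1 ≤ ξ → ∑' j : ℕ, χ ((2 : ℝ) ^ (-(j : ℝ)) * ξ) = 1)
    (a : ℝ) (ha : 0 < a)
    (happrox : ∀ δ : ℝ, 0 < δ → ∃ J : ℕ, ∀ j : ℕ, J ≤ j →
      ∃ (p q : ℕ), 0 < q ∧ Nat.Coprime p q ∧
        |a - (p : ℝ) / q| ≤ 1 / (q : ℝ) ^ 2 ∧
        (2 : ℝ) ^ ((j : ℝ) * (1 - δ)) ≤ q ∧ (q : ℝ) ≤ (2 : ℝ) ^ ((j : ℝ) * (1 + δ)))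
    (t : ℝ) (ht : t = 2 * π * a) :
    ∀ δ : ℝ, 0 < δ → ∃ C : ℝ, 0 < C ∧ ∀ j : ℕ, 1 ≤ j → ∀ x : ℝ,
      ‖∑ n ∈ Icc (2 ^ (j - 1) : ℕ) (2 ^ (j + 1)),
          ((χ ((2 : ℝ) ^ (-(j : ℝ)) * n) : ℝ) : ℂ) *
            Complex.exp (Complex.I * n ^ 2 * t + Complex.I * n * x)‖ ≤
        C * (2 : ℝ) ^ (((j : ℝ) / 2) * (1 + δ)) := by
  intro δ hδ
  have hcs : HasCompactSupport χ := by
    rw [HasCompactSupport, hχsupp]; exact isCompact_Icc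
  obtain ⟨Λ, hΛ⟩ := hχ.lipschitzWith_of_hasCompactSupport hcs (by simp)
  have hε : 0 < δ / 3 := by positivity
  obtain ⟨J, hJ⟩ := happrox (δ / 3) hε
  set D : ℝ := 2 + 44 * (4 + (1 + δ / 3) * (2 / (δ / 3))) with hD
  have hD0 : 0 < D := by positivity
  refine ⟨(1 + 2 * Λ) * √D + 2 * 2 ^ J, by positivity, ?_⟩
  intro j hj x
  set A : ℕ := 2 ^ (j - 1) with hA
  set M : ℕ := 2 ^ (j + 1) + 1 - A with hMdef
  set N : ℝ := (2:ℝ) ^ (j : ℝ) with hN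
  have hN' : N = (2:ℝ) ^ j := by rw [hN, Real.rpow_natCast]
  have hNpos : 0 < N := by positivity
  have hA1 : 1 ≤ A := Nat.one_le_two_pow
  have hM : (M : ℝ) ≤ 2 * N := by
    have : M ≤ 2 * 2 ^ j := by rw [hMdef, pow_succ]; omega
    rw [hN']; exact_mod_cast this
  have hNj : (2:ℝ) ^ (-(j:ℝ)) = N⁻¹ := by rw [hN, Real.rpow_neg (by norm_num)]
  have hset : (Finset.Icc A (2 ^ (j + 1))) = Finset.Ico A (2 ^ (j + 1) + 1) := by
    ext n; simp only [Finset.mem_Icc, Finset.mem_Ico]; omega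
  rw [hset, Finset.sum_Ico_eq_sum_range]
  have habs : ∀ ξ, |χ ξ| ≤ 1 := by
    intro ξ; rw [abs_of_nonneg (hχ01 ξ).1]; exact (hχ01 ξ).2
  have hP1 : (1:ℝ) ≤ (2 : ℝ) ^ (((j : ℝ) / 2) * (1 + δ)) :=
    Real.one_le_rpow (by norm_num) (by positivity)
  set P : ℝ := (2 : ℝ) ^ (((j : ℝ) / 2) * (1 + δ)) with hP
  set z : ℕ → ℂ := fun n => Complex.exp (Complex.I * ((A + n : ℕ) : ℂ) ^ 2 * t
        + Complex.I * ((A + n : ℕ) : ℂ) * x) with hz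
  have hz1 : ∀ n, ‖z n‖ = 1 := by
    intro n
    have : z n = Complex.exp ((((A + n : ℕ) : ℝ) ^ 2 * t + ((A + n : ℕ) : ℝ) * x : ℝ) * Complex.I) := by
      simp only [hz]; congr 1; push_cast; ring
    rw [this]; exact Complex.norm_exp_ofReal_mul_I _
  set w : ℕ → ℝ := fun n => χ ((2 : ℝ) ^ (-(j : ℝ)) * ((A + n : ℕ) : ℝ)) with hw
  change ‖∑ n ∈ Finset.range M, (w n : ℂ) * z n‖ ≤ _
  rcases lt_or_ge j J with hjJ | hjJ
  · have h1 : ‖∑ n ∈ Finset.range M, (w n : ℂ) * z n‖ ≤ M := by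
      refine (norm_sum_le _ _).trans ?_
      calc _ ≤ ∑ n ∈ Finset.range M, (1:ℝ) := by
            apply Finset.sum_le_sum
            intro n _
            rw [norm_mul, hz1, mul_one, Complex.norm_real]
            exact habs _
        _ = M := by simp
    have h2 : N ≤ 2 ^ J := by
      rw [hN']; exact pow_le_pow_right₀ (by norm_num) hjJ.le
    calc _ ≤ (2 * 2 ^ J : ℝ) := by linarith
      _ ≤ (1 + 2 * Λ) * √D + 2 * 2 ^ J := by
        have : 0 ≤ (1 + 2 * (Λ:ℝ)) * √D := by positivity
        linarith
      _ ≤ _ := le_mul_of_one_le_right (by positivity) hP1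
  · obtain ⟨p, q, hq, hpq, hap, hq1, hq2⟩ := hJ j hjJ
    have hR : ∀ m ≤ M, ‖∑ n ∈ Finset.range m, z n‖ ≤ √D * P := by
      intro m hm
      have h1 := lp_weyl a t x A M m p q hm ht hq hpq hap
      have h2 := lp_size (δ / 3) hε j M q hq hM hq1 hq2
      have h3 : (2 : ℝ) ^ ((j : ℝ) * (1 + 3 * (δ / 3))) = P ^ 2 := by
        rw [hP, ← Real.rpow_natCast, ← Real.rpow_mul (by norm_num)]
        congr 1; push_cast; ring
      rw [h3, ← hD] at h2
      apply le_of_sq_le_sq _ (by positivity)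
      rw [mul_pow, Real.sq_sqrt hD0.le]
      exact h1.trans h2
    have hV : ∀ n < M, |w (n + 1) - w n| ≤ Λ * N⁻¹ := by
      intro n _
      have := hΛ.dist_le_mul ((2 : ℝ) ^ (-(j : ℝ)) * ((A + (n + 1) : ℕ) : ℝ))
        ((2 : ℝ) ^ (-(j : ℝ)) * ((A + n : ℕ) : ℝ))
      rw [Real.dist_eq, Real.dist_eq, ← mul_sub] at this
      refine this.trans_eq ?_
      rw [hNj]; push_cast
      rw [show (A:ℝ) + (n + 1) - (A + n) = 1 by ring, mul_one, abs_of_pos (inv_pos.2 hNpos)]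
    have hfin := lp_weighted w z M (√D * P) (Λ * N⁻¹) (habs _) hV hR
    refine hfin.trans ?_
    have hMV : M * (Λ * N⁻¹) ≤ 2 * (Λ:ℝ) := by
      calc M * (Λ * N⁻¹) ≤ (2 * N) * ((Λ:ℝ) * N⁻¹) :=
            mul_le_mul_of_nonneg_right hM (by positivity)
        _ = 2 * Λ := by field_simp
    calc _ ≤ (1 + 2 * Λ) * (√D * P) :=
          mul_le_mul_of_nonneg_right (by linarith) (by positivity)
      _ = ((1 + 2 * Λ) * √D) * P := by ring
      _ ≤ _ := mul_le_mul_of_nonneg_right (le_add_of_nonneg_right (by positivity)) (by positivity)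
end

section
/- For almost every real a > 0 (with respect to Lebesgue measure), the denominators q_n of the continued fraction convergents p_n/q_n of a satisfy lim_{n→∞} (log q_n)/n = π²/(12 log 2). -/
open Real Filter MeasureTheory Topology
namespace KL



/-! ### The Birkhoff pointwise ergodic theorem for ergodic maps -/

section Birkhoff

set_option linter.unusedSectionVars false

variable {α : Type*} [MeasurableSpace α] {μ : Measure α} {T : α → α} {f : α → ℝ}

/-- running maximum of the Birkhoff sums -/
noncomputable def runMax (T : α → α) (f : α → ℝ) : ℕ → α → ℝ
  | 0 => f
  | n + 1 => fun x => f x + max 0 (runMax T f n (T x))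

lemma runMax_mono_succ (n : ℕ) (x : α) : runMax T f n x ≤ runMax T f (n + 1) x := by
  induction n generalizing x with
  | zero => simp [runMax]
  | succ n ih =>
    have := ih (T x)
    simp only [runMax] at this ⊢
    gcongr

lemma runMax_mono (x : α) : Monotone (fun n => runMax T f n x) :=
  monotone_nat_of_le_succ fun n => runMax_mono_succ n x

lemma birkhoffSum_le_runMax (n : ℕ) (x : α) : birkhoffSum T f (n + 1) x ≤ runMax T f n x := by
  induction n generalizing x with
  | zero => simp [runMax]
  | succ n ih =>
    rw [birkhoffSum_succ']
    simp only [runMax]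
    gcongr
    exact (ih (T x)).trans (le_max_right _ _)

lemma runMax_measurable (hT : Measurable T) (hf : Measurable f) (n : ℕ) :
    Measurable (runMax T f n) := by
  induction n with
  | zero => exact hf
  | succ n ih => exact hf.add (measurable_const.max (ih.comp hT))

lemma runMax_integrable (hT : MeasurePreserving T μ μ) (hf : Integrable f μ) (n : ℕ) :
    Integrable (runMax T f n) μ := by
  induction n with
  | zero => exact hf
  | succ n ih =>
    have h1 : Integrable (fun x => runMax T f n (T x)) μ := hT.integrable_comp_of_integrable ih
    have := hf.add h1.pos_part
    refine this.congr (Eventually.of_forall fun x => ?_)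
    simp [runMax, max_comm]

lemma birkhoff_bdd [IsProbabilityMeasure μ] (hT : Ergodic T μ) (hfm : Measurable f)
    (hf : Integrable f μ) (hneg : ∫ x, f x ∂μ < 0) :
    ∀ᵐ x ∂μ, ∃ C, ∀ n, birkhoffSum T f n x ≤ C := by
  have hTm : Measurable T := hT.measurable
  set B : Set α := {x | BddAbove (Set.range fun n => runMax T f n x)} with hB
  have hBm : MeasurableSet B := measurableSet_bddAbove_range fun n => runMax_measurable hTm hfm n
  have hinv : T ⁻¹' B = B := by
    ext x
    simp only [hB, Set.mem_preimage, Set.mem_ofPred_eq]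
    constructor
    · rintro ⟨C, hC⟩
      refine ⟨f x + max 0 C, ?_⟩
      rintro _ ⟨n, rfl⟩
      refine (runMax_mono_succ n x).trans ?_
      simp only [runMax]
      gcongr
      exact hC ⟨n, rfl⟩
    · rintro ⟨C, hC⟩
      refine ⟨C - f x, ?_⟩
      rintro _ ⟨n, rfl⟩
      have : runMax T f (n + 1) x ≤ C := hC ⟨n + 1, rfl⟩
      simp only [runMax] at this
      have := le_max_right 0 (runMax T f n (T x))
      simp only
      linarith
  have key : ∀ᵐ x ∂μ, x ∈ B := by
    rcases (eventuallyConst_set'.1 (hT.aeconst_set hBm hinv)) with h | h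
    · exfalso
      have hnot : ∀ᵐ x ∂μ, x ∉ B := by
        filter_upwards [h.mem_iff] with x hx hxB
        exact hx.1 hxB
      have hlim : Tendsto (fun n => ∫ x, (runMax T f (n + 1) x - runMax T f n (T x)) ∂μ) atTop
          (𝓝 (∫ x, f x ∂μ)) := by
        have hfT : Integrable (fun x => f (T x)) μ :=
          hT.toMeasurePreserving.integrable_comp_of_integrable hf
        refine tendsto_integral_of_dominated_convergence (fun x => |f x| + |f (T x)|) ?_ ?_ ?_ ?_
        · intro n
          exact ((runMax_measurable hTm hfm _).sub
            ((runMax_measurable hTm hfm n).comp hTm)).aestronglyMeasurable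
        · exact hf.abs.add hfT.abs
        · intro n
          refine Eventually.of_forall fun x => ?_
          have h1 : f (T x) ≤ runMax T f n (T x) := runMax_mono (T := T) (f := f) (T x) (Nat.zero_le n)
          simp only [runMax, Real.norm_eq_abs]
          rcases le_total 0 (runMax T f n (T x)) with h2 | h2
          · rw [max_eq_right h2]; simp
          · rw [max_eq_left h2]
            have h3 := neg_abs_le (f (T x))
            have h4 := neg_abs_le (f x)
            have h5 := le_abs_self (f x)
            rw [abs_le]; constructor <;> linarith [abs_nonneg (f (T x))]
        · filter_upwards [hnot] with x hx
          rw [← hinv] at hx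
          have hunb : ¬ BddAbove (Set.range fun n => runMax T f n (T x)) := hx
          have htop := tendsto_atTop_atTop_of_monotone' (runMax_mono (T := T) (f := f) (T x)) hunb
          refine tendsto_const_nhds.congr' ?_
          filter_upwards [htop.eventually_ge_atTop 0] with n hn
          simp only [runMax]
          rw [max_eq_right hn]; ring
      have hpos : 0 ≤ ∫ x, f x ∂μ := by
        refine ge_of_tendsto' hlim fun n => ?_
        have hi := runMax_integrable hT.toMeasurePreserving hf
        have hiT : Integrable (fun x => runMax T f n (T x)) μ :=
          hT.toMeasurePreserving.integrable_comp_of_integrable (hi n)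
        rw [integral_sub (hi (n + 1)) hiT]
        have : ∫ x, runMax T f n (T x) ∂μ = ∫ x, runMax T f n x ∂μ := by
          have h1 := integral_map (μ := μ) (φ := T) hTm.aemeasurable (f := runMax T f n)
            (runMax_measurable hTm hfm n).aestronglyMeasurable
          rw [hT.toMeasurePreserving.map_eq] at h1
          exact h1.symm
        rw [this, sub_nonneg]
        exact integral_mono (hi n) (hi (n + 1)) fun x => runMax_mono_succ n x
      linarith
    · filter_upwards [h.mem_iff] with x hx
      exact hx.2 trivial
  filter_upwards [key] with x hx
  obtain ⟨C, hC⟩ := hx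
  refine ⟨max 0 C, fun n => ?_⟩
  cases n with
  | zero => simp
  | succ n => exact (birkhoffSum_le_runMax n x).trans ((hC ⟨n, rfl⟩).trans (le_max_right _ _))

lemma birkhoff_upper [IsProbabilityMeasure μ] (hT : Ergodic T μ) (hfm : Measurable f)
    (hf : Integrable f μ) : ∀ᵐ x ∂μ, ∀ c : ℝ, ∫ x, f x ∂μ < c →
      ∀ᶠ n : ℕ in atTop, birkhoffSum T f n x / n < c := by
  have h : ∀ᵐ x ∂μ, ∀ k : ℕ, ∃ C, ∀ n,
      birkhoffSum T (fun y => f y - (∫ x, f x ∂μ + 1 / ((k : ℝ) + 1))) n x ≤ C := by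
    rw [ae_all_iff]
    intro k
    refine birkhoff_bdd hT (hfm.sub measurable_const) (hf.sub (integrable_const _)) ?_
    rw [integral_sub hf (integrable_const _)]
    simp
    positivity
  filter_upwards [h] with x hx c hc
  obtain ⟨k, hk⟩ := exists_nat_one_div_lt (sub_pos.2 hc)
  obtain ⟨C, hC⟩ := hx k
  set m := ∫ x, f x ∂μ
  have hl : Tendsto (fun n : ℕ => C / n + (m + 1 / ((k : ℝ) + 1))) atTop
      (𝓝 (0 + (m + 1 / ((k : ℝ) + 1)))) :=
    (tendsto_const_div_atTop_nhds_zero_nat C).add tendsto_const_nhds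
  have hlt : 0 + (m + 1 / ((k : ℝ) + 1)) < c := by linarith
  filter_upwards [hl.eventually_lt_const hlt, eventually_gt_atTop 0] with n hn hn0
  refine lt_of_le_of_lt ?_ hn
  have hn0' : (0 : ℝ) < n := by exact_mod_cast hn0
  have := hC n
  simp only [birkhoffSum, Finset.sum_sub_distrib, Finset.sum_const, Finset.card_range,
    nsmul_eq_mul] at this ⊢
  rw [div_le_iff₀ hn0', add_mul, div_mul_cancel₀ _ hn0'.ne']
  linarith

theorem birkhoff [IsProbabilityMeasure μ] (hT : Ergodic T μ) (hfm : Measurable f)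
    (hf : Integrable f μ) : ∀ᵐ x ∂μ,
      Tendsto (fun n : ℕ => birkhoffSum T f n x / n) atTop (𝓝 (∫ x, f x ∂μ)) := by
  filter_upwards [birkhoff_upper hT hfm hf, birkhoff_upper hT hfm.neg hf.neg] with x h1 h2
  refine tendsto_order.2 ⟨fun a ha => ?_, fun a ha => h1 a ha⟩
  have := h2 (-a) (by simp [integral_neg]; exact ha)
  filter_upwards [this] with n hn
  have : birkhoffSum T (-f) n x = - birkhoffSum T f n x := by simp [birkhoffSum]
  rw [this, neg_div] at hn
  linarith

end Birkhoff

/-! ### The Gauss map and denominators -/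

/-- The Gauss map. -/
noncomputable def gaussMap (x : ℝ) : ℝ := Int.fract x⁻¹

lemma irrational_fract {a : ℝ} (ha : Irrational a) : Irrational (Int.fract a) := by
  rw [← Int.self_sub_floor]; exact ha.sub_intCast _

lemma irrational_gaussMap {a : ℝ} (ha : Irrational a) : Irrational (gaussMap a) :=
  irrational_fract ha.inv

lemma irrational_iterate {a : ℝ} (ha : Irrational a) (n : ℕ) : Irrational (gaussMap^[n] a) := by
  induction n with
  | zero => exact ha
  | succ n ih => rw [Function.iterate_succ_apply']; exact irrational_gaussMap ih

lemma iterate_pos {a : ℝ} (ha : Irrational a) (n : ℕ) : 0 < gaussMap^[n] (Int.fract a) := by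
  have h0 : 0 ≤ gaussMap^[n] (Int.fract a) := by
    cases n with
    | zero => exact Int.fract_nonneg _
    | succ n => rw [Function.iterate_succ_apply']; exact Int.fract_nonneg _
  exact lt_of_le_of_ne h0 (irrational_iterate (irrational_fract ha) n).ne_zero.symm

lemma iterate_lt_one (a : ℝ) (n : ℕ) : gaussMap^[n] (Int.fract a) < 1 := by
  cases n with
  | zero => exact Int.fract_lt_one _
  | succ n => rw [Function.iterate_succ_apply']; exact Int.fract_lt_one _

lemma stream_fr {a : ℝ} (ha : Irrational a) (n : ℕ) :
    ∃ p, GenContFract.IntFractPair.stream a n = some p ∧ p.fr = gaussMap^[n] (Int.fract a) := by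
  induction n with
  | zero => exact ⟨_, rfl, rfl⟩
  | succ n ih =>
    obtain ⟨p, hp, hfr⟩ := ih
    have hne : p.fr ≠ 0 := by rw [hfr]; exact (iterate_pos ha n).ne'
    refine ⟨_, GenContFract.IntFractPair.stream_succ_of_some hp hne, ?_⟩
    rw [Function.iterate_succ_apply', ← hfr]
    rfl

lemma s_get {a : ℝ} (ha : Irrational a) (n : ℕ) :
    (GenContFract.of a).s.get? n = some ⟨1, (⌊(gaussMap^[n] (Int.fract a))⁻¹⌋ : ℝ)⟩ := by
  obtain ⟨p, hp, hfr⟩ := stream_fr ha n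
  have hne : p.fr ≠ 0 := by rw [hfr]; exact (iterate_pos ha n).ne'
  rw [GenContFract.get?_of_eq_some_of_get?_intFractPair_stream_fr_ne_zero hp hne, hfr]
  rfl

lemma dens_prod {a : ℝ} (ha : Irrational a) (n : ℕ) :
    ((GenContFract.of a).contsAux (n + 1)).b
      + ((GenContFract.of a).contsAux n).b * gaussMap^[n] (Int.fract a)
      = ∏ k ∈ Finset.range n, (gaussMap^[k] (Int.fract a))⁻¹ := by
  induction n with
  | zero => simp [GenContFract.contsAux]
  | succ n ih =>
    rw [Finset.prod_range_succ, ← ih,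
      GenContFract.contsAux_recurrence (s_get ha n) rfl rfl, Function.iterate_succ_apply']
    set t := gaussMap^[n] (Int.fract a) with ht
    have htp : t ≠ 0 := (iterate_pos ha n).ne'
    have : gaussMap t = t⁻¹ - ⌊t⁻¹⌋ := rfl
    rw [this]
    simp only
    field_simp
    ring

lemma dens_bounds {a : ℝ} (ha : Irrational a) (n : ℕ) :
    1 ≤ (GenContFract.of a).dens n ∧
    (GenContFract.of a).dens n ≤ ∏ k ∈ Finset.range n, (gaussMap^[k] (Int.fract a))⁻¹ ∧
    ∏ k ∈ Finset.range n, (gaussMap^[k] (Int.fract a))⁻¹ ≤ 2 * (GenContFract.of a).dens n := by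
  have h1 : ∀ n, 0 ≤ ((GenContFract.of a).contsAux n).b ∧
      1 ≤ ((GenContFract.of a).contsAux (n + 1)).b ∧
      ((GenContFract.of a).contsAux n).b ≤ ((GenContFract.of a).contsAux (n + 1)).b := by
    intro n
    induction n with
    | zero => simp [GenContFract.contsAux]
    | succ n ih =>
      obtain ⟨i1, i2, i3⟩ := ih
      rw [GenContFract.contsAux_recurrence (s_get ha n) rfl rfl]
      have hfl : (1 : ℝ) ≤ (⌊(gaussMap^[n] (Int.fract a))⁻¹⌋ : ℝ) := by
        have : (1 : ℤ) ≤ ⌊(gaussMap^[n] (Int.fract a))⁻¹⌋ := by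
          rw [Int.le_floor]
          push_cast
          exact (one_le_inv₀ (iterate_pos ha n)).2 (iterate_lt_one a n).le
        exact_mod_cast this
      refine ⟨by linarith, ?_, ?_⟩ <;> simp only <;> nlinarith
  have hd : (GenContFract.of a).dens n = ((GenContFract.of a).contsAux (n + 1)).b := rfl
  obtain ⟨i1, i2, i3⟩ := h1 n
  have hp := iterate_pos ha n
  have hl := iterate_lt_one a n
  rw [hd, ← dens_prod ha n]
  refine ⟨i2, ?_, ?_⟩ <;> nlinarith

lemma log_dens {a : ℝ} (ha : Irrational a) {m : ℝ}
    (h : Tendsto (fun n : ℕ => birkhoffSum gaussMap (fun x => - Real.log x) n (Int.fract a) / n)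
      atTop (𝓝 m)) :
    Tendsto (fun n : ℕ => Real.log ((GenContFract.of a).dens n) / n) atTop (𝓝 m) := by
  have hs : ∀ n : ℕ, birkhoffSum gaussMap (fun x => - Real.log x) n (Int.fract a)
      = Real.log (∏ k ∈ Finset.range n, (gaussMap^[k] (Int.fract a))⁻¹) := by
    intro n
    rw [Real.log_prod (fun k _ => inv_ne_zero (iterate_pos ha k).ne')]
    simp [birkhoffSum]
  have h2 : Tendsto (fun n : ℕ =>
      birkhoffSum gaussMap (fun x => - Real.log x) n (Int.fract a) / n - Real.log 2 / n)
      atTop (𝓝 (m - 0)) := h.sub (tendsto_const_div_atTop_nhds_zero_nat _)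
  rw [sub_zero] at h2
  refine tendsto_of_tendsto_of_tendsto_of_le_of_le h2 h ?_ ?_
  · intro n
    obtain ⟨b1, b2, b3⟩ := dens_bounds ha n
    simp only
    rw [← sub_div, hs]
    gcongr
    rw [sub_le_iff_le_add, add_comm, ← Real.log_mul (by norm_num) (by linarith)]
    exact Real.log_le_log (by linarith) b3
  · intro n
    obtain ⟨b1, b2, b3⟩ := dens_bounds ha n
    simp only
    rw [hs]
    gcongr

/-! ### The integral of `-log x / (1 + x)` -/

lemma pow_log (n : ℕ) : IntegrableOn (fun x : ℝ => x ^ n * (-Real.log x)) (Set.Ioc 0 1) ∧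
    ∫ x in Set.Ioc (0 : ℝ) 1, x ^ n * (-Real.log x) = 1 / ((n : ℝ) + 1) ^ 2 := by
  set F : ℝ → ℝ := fun x => x ^ (n + 1) / ((n : ℝ) + 1) ^ 2 - x ^ n * (x * Real.log x) / ((n : ℝ) + 1)
    with hF
  have hcont : Continuous F := by
    have := Real.continuous_mul_log
    fun_prop
  have hderiv : ∀ x ∈ Set.Ioo (0 : ℝ) 1, HasDerivAt F (x ^ n * (-Real.log x)) x := by
    intro x hx
    have hx0 : x ≠ 0 := hx.1.ne'
    have h1 : HasDerivAt (fun x : ℝ => x ^ (n + 1) / ((n : ℝ) + 1) ^ 2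
        - x ^ (n + 1) * Real.log x / ((n : ℝ) + 1)) (x ^ n * (-Real.log x)) x := by
      have hp := hasDerivAt_pow (n + 1) x
      have := (hp.div_const (((n : ℝ) + 1) ^ 2)).sub
        ((hp.mul (Real.hasDerivAt_log hx0)).div_const ((n : ℝ) + 1))
      refine this.congr_deriv ?_
      have : ((n : ℝ) + 1) ≠ 0 := by positivity
      push_cast
      field_simp
      ring
    refine h1.congr_of_eventuallyEq (Eventually.of_forall fun y => ?_)
    simp only [hF]; ring
  have hint : IntegrableOn (fun x : ℝ => x ^ n * (-Real.log x)) (Set.Ioc 0 1) :=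
    intervalIntegral.integrableOn_deriv_of_nonneg hcont.continuousOn hderiv fun x hx =>
      mul_nonneg (pow_nonneg hx.1.le _) (neg_nonneg.2 (Real.log_nonpos hx.1.le hx.2.le))
  refine ⟨hint, ?_⟩
  rw [← intervalIntegral.integral_of_le zero_le_one,
    intervalIntegral.integral_eq_sub_of_hasDerivAt_of_le zero_le_one hcont.continuousOn hderiv
      ((intervalIntegrable_iff_integrableOn_Ioc_of_le zero_le_one).2 hint)]
  simp [hF]

lemma alt_zeta : HasSum (fun n : ℕ => (-1 : ℝ) ^ n * (1 / ((n : ℝ) + 1) ^ 2)) (π ^ 2 / 12) := by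
  have h0 := hasSum_zeta_two
  have hz : HasSum (fun n : ℕ => 1 / ((n : ℝ) + 1) ^ 2) (π ^ 2 / 6) := by
    have := (hasSum_nat_add_iff' (f := fun n : ℕ => (1 : ℝ) / (n : ℝ) ^ 2) 1).2 h0
    simpa using this
  -- odd indices carry a quarter of the sum
  have hodd : HasSum (fun n : ℕ => 1 / (((2 * n + 1 : ℕ) : ℝ) + 1) ^ 2) (π ^ 2 / 24) := by
    have e : (fun n : ℕ => 1 / (((2 * n + 1 : ℕ) : ℝ) + 1) ^ 2)
        = fun n : ℕ => 1 / 4 * (1 / ((n : ℝ) + 1) ^ 2) := by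
      ext n
      have : (n : ℝ) + 1 ≠ 0 := by positivity
      have h2 : (((2 * n + 1 : ℕ) : ℝ) + 1) = 2 * ((n : ℝ) + 1) := by push_cast; ring
      rw [h2]
      field_simp
      norm_num
    rw [e, show π ^ 2 / 24 = 1 / 4 * (π ^ 2 / 6) by ring]
    exact hz.mul_left (1 / 4)
  have hev : HasSum (fun n : ℕ => 1 / (((2 * n : ℕ) : ℝ) + 1) ^ 2) (π ^ 2 / 8) := by
    have hs : Summable (fun n : ℕ => 1 / (((2 * n : ℕ) : ℝ) + 1) ^ 2) :=
      hz.summable.comp_injective (i := fun n : ℕ => 2 * n) (fun a b h => by simpa using h)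
    have h1 := HasSum.even_add_odd (f := fun n : ℕ => 1 / ((n : ℝ) + 1) ^ 2) hs.hasSum hodd
    have h2 := h1.unique hz
    have : (∑' n : ℕ, 1 / (((2 * n : ℕ) : ℝ) + 1) ^ 2) = π ^ 2 / 8 := by linarith
    rw [← this]; exact hs.hasSum
  have := HasSum.even_add_odd (f := fun n : ℕ => (-1 : ℝ) ^ n * (1 / ((n : ℝ) + 1) ^ 2))
    (m := π ^ 2 / 8) (m' := - (π ^ 2 / 24)) ?_ ?_
  · convert this using 1; ring
  · simpa [pow_mul] using hev
  · simpa [pow_mul, pow_succ] using hodd.neg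

lemma log_integrable : IntegrableOn (fun x : ℝ => -Real.log x) (Set.Ioo 0 1) := by
  have := (pow_log 0).1
  simp only [pow_zero, one_mul] at this
  exact this.mono_set Set.Ioo_subset_Ioc_self

lemma log_integral : ∫ x in Set.Ioo (0 : ℝ) 1, (1 + x)⁻¹ * (-Real.log x) = π ^ 2 / 12 := by
  have key := hasSum_integral_of_summable_integral_norm
    (μ := volume.restrict (Set.Ioo (0 : ℝ) 1))
    (F := fun (n : ℕ) (x : ℝ) => (-1 : ℝ) ^ n * (x ^ n * (-Real.log x))) ?_ ?_
  · have h1 : ∀ n : ℕ, ∫ x in Set.Ioo (0 : ℝ) 1, (-1 : ℝ) ^ n * (x ^ n * (-Real.log x))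
        = (-1 : ℝ) ^ n * (1 / ((n : ℝ) + 1) ^ 2) := by
      intro n
      rw [integral_const_mul, ← integral_Ioc_eq_integral_Ioo, (pow_log n).2]
    simp only [h1] at key
    rw [← key.unique alt_zeta]
    refine setIntegral_congr_fun measurableSet_Ioo fun x hx => ?_
    have hx1 : ‖-x‖ < 1 := by rw [norm_neg, Real.norm_eq_abs, abs_of_pos hx.1]; exact hx.2
    have := (hasSum_geometric_of_norm_lt_one hx1).mul_right (-Real.log x)
    rw [sub_neg_eq_add] at this
    rw [← this.tsum_eq]
    congr 1; ext n; rw [← mul_assoc, ← mul_pow]; simp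
  · intro n
    exact ((pow_log n).1.mono_set Set.Ioo_subset_Ioc_self).const_mul _
  · have h1 : ∀ n : ℕ, ∫ x in Set.Ioo (0 : ℝ) 1, ‖(-1 : ℝ) ^ n * (x ^ n * (-Real.log x))‖
        = 1 / ((n : ℝ) + 1) ^ 2 := by
      intro n
      rw [← (pow_log n).2, integral_Ioc_eq_integral_Ioo]
      refine setIntegral_congr_fun measurableSet_Ioo fun x hx => ?_
      have : 0 ≤ x ^ n * (-Real.log x) :=
        mul_nonneg (pow_nonneg hx.1.le _) (neg_nonneg.2 (Real.log_nonpos hx.1.le hx.2.le))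
      simp only [norm_mul, norm_pow, norm_neg, norm_one, one_pow, one_mul]
      rw [← norm_neg (Real.log x), ← norm_pow, ← norm_mul, Real.norm_of_nonneg this]
    simp only [h1]
    have := alt_zeta.summable.norm
    refine this.congr fun n => ?_
    rw [norm_mul, norm_pow]; simp

/-! ### Change of variables along the inverse branches -/

/-- inverse branch of the Gauss map -/
noncomputable def br (k : ℕ) (t : ℝ) : ℝ := ((k : ℝ) + 1 + t)⁻¹

lemma br_image (k : ℕ) : br k '' Set.Ioo 0 1 = Set.Ioo (((k : ℝ) + 2)⁻¹) (((k : ℝ) + 1)⁻¹) := by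
  have hk : (0 : ℝ) ≤ k := Nat.cast_nonneg k
  ext x
  simp only [Set.mem_image, Set.mem_Ioo, br]
  constructor
  · rintro ⟨t, ⟨h0, h1⟩, rfl⟩
    constructor
    · apply inv_strictAnti₀ <;> linarith
    · apply inv_strictAnti₀ <;> linarith
  · rintro ⟨h0, h1⟩
    have hx : 0 < x := lt_trans (by positivity) h0
    refine ⟨x⁻¹ - (k + 1), ⟨?_, ?_⟩, ?_⟩
    · have := (lt_inv_comm₀ hx (by positivity)).1 h1
      linarith
    · have := (inv_lt_comm₀ (by positivity) hx).1 h0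
      linarith
    · simp

lemma br_deriv (k : ℕ) : ∀ t ∈ Set.Ioo (0 : ℝ) 1,
    HasDerivWithinAt (br k) (-(((k : ℝ) + 1 + t) ^ 2)⁻¹) (Set.Ioo 0 1) t := by
  intro t ht
  have hk : (0 : ℝ) ≤ k := Nat.cast_nonneg k
  have hne : (k : ℝ) + 1 + t ≠ 0 := by have := ht.1; positivity
  have h1 : HasDerivAt (fun t : ℝ => (k : ℝ) + 1 + t) 1 t := (hasDerivAt_id t).const_add _
  have := (h1.inv hne).hasDerivWithinAt (s := Set.Ioo 0 1)
  refine this.congr_deriv ?_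
  rw [neg_div, one_div]

lemma br_inj (k : ℕ) : Set.InjOn (br k) (Set.Ioo 0 1) := by
  intro a _ b _ h
  simpa [br] using h

lemma branches_ae : (⋃ k : ℕ, Set.Ioo (((k : ℝ) + 2)⁻¹) (((k : ℝ) + 1)⁻¹)) =ᵐ[volume]
    Set.Ioo (0 : ℝ) 1 := by
  have hc : (Set.range fun k : ℕ => ((k : ℝ) + 1)⁻¹).Countable := Set.countable_range _
  have hn : ∀ᵐ x : ℝ, x ∉ (Set.range fun k : ℕ => ((k : ℝ) + 1)⁻¹) := hc.ae_notMem _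
  refine eventuallyEq_set.2 ?_
  filter_upwards [hn] with x hx
  simp only [Set.mem_iUnion, Set.mem_Ioo]
  constructor
  · rintro ⟨k, h0, h1⟩
    refine ⟨lt_trans (by positivity) h0, lt_of_lt_of_le h1 (inv_le_one_of_one_le₀ ?_)⟩
    have hk : (0 : ℝ) ≤ k := Nat.cast_nonneg k
    linarith
  · rintro ⟨h0, h1⟩
    have h2 : 1 < x⁻¹ := (one_lt_inv₀ h0).2 h1
    have h3 : 1 ≤ ⌊x⁻¹⌋₊ := Nat.le_floor (by exact_mod_cast h2.le)
    obtain ⟨k, hk⟩ := Nat.exists_eq_add_of_le' h3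
    refine ⟨k, ?_, ?_⟩
    · rw [inv_lt_comm₀ (by positivity) h0]
      have := Nat.lt_floor_add_one x⁻¹
      rw [hk] at this
      push_cast at this
      linarith
    · have h4 : x ≤ ((k : ℝ) + 1)⁻¹ := by
        rw [le_inv_comm₀ h0 (by positivity)]
        have := Nat.floor_le (inv_nonneg.2 h0.le)
        rw [hk] at this
        exact_mod_cast this
      exact lt_of_le_of_ne h4 fun h => hx ⟨k, h.symm⟩

lemma branches_disj : Pairwise (Function.onFun Disjoint
    fun k : ℕ => Set.Ioo (((k : ℝ) + 2)⁻¹) (((k : ℝ) + 1)⁻¹)) := by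
  have hl : ∀ i j : ℕ, i < j → Disjoint (Set.Ioo (((i : ℝ) + 2)⁻¹) (((i : ℝ) + 1)⁻¹))
      (Set.Ioo (((j : ℝ) + 2)⁻¹) (((j : ℝ) + 1)⁻¹)) := by
    intro i j hij
    rw [Set.disjoint_left]
    rintro x ⟨h0, _⟩ ⟨_, h1⟩
    have : ((j : ℝ) + 1)⁻¹ ≤ ((i : ℝ) + 2)⁻¹ := by
      apply inv_anti₀ (by positivity)
      have : (i : ℝ) + 1 ≤ j := by exact_mod_cast hij
      linarith
    linarith
  intro i j hij
  rcases lt_or_gt_of_ne hij with h | h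
  · exact hl i j h
  · exact (hl j i h).symm

lemma branch_integrable {Φ : ℝ → ℝ} (hΦ : IntegrableOn Φ (Set.Ioo 0 1)) (k : ℕ) :
    IntegrableOn (fun t => (((k : ℝ) + 1 + t) ^ 2)⁻¹ * Φ (br k t)) (Set.Ioo 0 1) := by
  have h1 : IntegrableOn Φ (br k '' Set.Ioo 0 1) := by
    rw [br_image]
    refine hΦ.mono_set ?_
    intro x hx
    have hk : (0 : ℝ) ≤ k := Nat.cast_nonneg k
    exact ⟨lt_trans (by positivity) hx.1,
      lt_of_lt_of_le hx.2 (inv_le_one_of_one_le₀ (by linarith))⟩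
  have h2 := (integrableOn_image_iff_integrableOn_abs_deriv_smul measurableSet_Ioo
    (br_deriv k) (br_inj k) Φ).1 h1
  refine h2.congr_fun (fun t ht => ?_) measurableSet_Ioo
  simp only [smul_eq_mul, abs_neg]
  rw [abs_of_nonneg (by positivity)]

lemma branch_hasSum {Φ : ℝ → ℝ} (hΦ : IntegrableOn Φ (Set.Ioo 0 1)) :
    HasSum (fun k : ℕ => ∫ t in Set.Ioo (0 : ℝ) 1, (((k : ℝ) + 1 + t) ^ 2)⁻¹ * Φ (br k t))
      (∫ x in Set.Ioo (0 : ℝ) 1, Φ x) := by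
  have h1 := hasSum_integral_iUnion (μ := volume) (f := Φ)
    (s := fun k : ℕ => Set.Ioo (((k : ℝ) + 2)⁻¹) (((k : ℝ) + 1)⁻¹)) (fun _ => measurableSet_Ioo)
    branches_disj (hΦ.congr_set_ae branches_ae)
  rw [setIntegral_congr_set branches_ae] at h1
  refine h1.congr_fun ?_
  intro k
  rw [← br_image, integral_image_eq_integral_abs_deriv_smul measurableSet_Ioo
    (br_deriv k) (br_inj k) Φ]
  refine setIntegral_congr_fun measurableSet_Ioo fun t ht => ?_
  simp only [smul_eq_mul, abs_neg]
  rw [abs_of_nonneg (by positivity)]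

lemma branch_tsum {Φ : ℝ → ℝ} (hΦ : IntegrableOn Φ (Set.Ioo 0 1)) :
    ∫ x in Set.Ioo (0 : ℝ) 1, Φ x =
      ∫ t in Set.Ioo (0 : ℝ) 1, ∑' k : ℕ, (((k : ℝ) + 1 + t) ^ 2)⁻¹ * Φ (br k t) := by
  have h1 := hasSum_integral_of_summable_integral_norm
    (μ := volume.restrict (Set.Ioo (0 : ℝ) 1))
    (F := fun (k : ℕ) (t : ℝ) => (((k : ℝ) + 1 + t) ^ 2)⁻¹ * Φ (br k t))
    (branch_integrable hΦ) ?_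
  · exact (branch_hasSum hΦ).unique h1
  · refine (branch_hasSum hΦ.norm).summable.congr fun k => ?_
    refine setIntegral_congr_fun measurableSet_Ioo fun t ht => ?_
    simp only [norm_mul]
    rw [Real.norm_of_nonneg (by positivity : 0 ≤ (((k : ℝ) + 1 + t) ^ 2)⁻¹)]

/-! ### The transfer operator with respect to the Gauss measure -/

/-- weights of the transfer operator -/
noncomputable def wt (k : ℕ) (x : ℝ) : ℝ := (1 + x) / (((k : ℝ) + 1 + x) * ((k : ℝ) + 2 + x))

/-- the transfer operator -/
noncomputable def tr (g : ℝ → ℝ) (x : ℝ) : ℝ := ∑' k : ℕ, wt k x * g (br k x)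

lemma wt_nonneg (k : ℕ) {x : ℝ} (hx : 0 ≤ x) : 0 ≤ wt k x := by
  unfold wt; positivity

lemma wt_sum (n : ℕ) {x : ℝ} (hx : 0 ≤ x) :
    ∑ k ∈ Finset.range n, wt k x = 1 - (1 + x) / ((n : ℝ) + 1 + x) := by
  induction n with
  | zero =>
    have : 1 + x ≠ 0 := by positivity
    simp [this]
  | succ n ih =>
    rw [Finset.sum_range_succ, ih, wt]
    have h1 : (n : ℝ) + 1 + x ≠ 0 := by positivity
    have h2 : (n : ℝ) + 2 + x ≠ 0 := by positivity
    have h3 : ((n + 1 : ℕ) : ℝ) + 1 + x = (n : ℝ) + 2 + x := by push_cast; ring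
    rw [h3]
    field_simp
    ring

lemma wt_hasSum {x : ℝ} (hx : 0 ≤ x) : HasSum (fun k => wt k x) 1 := by
  rw [hasSum_iff_tendsto_nat_of_nonneg (fun k => wt_nonneg k hx)]
  simp only [fun n => wt_sum n hx]
  have h1 : Tendsto (fun n : ℕ => (n : ℝ) + 1 + x) atTop atTop := by
    simp only [add_assoc]
    exact tendsto_atTop_add_const_right _ _ tendsto_natCast_atTop_atTop
  have := (tendsto_const_nhds (x := (1 : ℝ))).sub (h1.const_div_atTop (1 + x))
  simpa using this

lemma br_mem (k : ℕ) {x : ℝ} (hx : 0 ≤ x) : br k x ∈ Set.Icc (0 : ℝ) 1 := by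
  have hk : (0 : ℝ) ≤ k := Nat.cast_nonneg k
  refine ⟨by unfold br; positivity, inv_le_one_of_one_le₀ (by linarith)⟩

lemma tr_summable {g : ℝ → ℝ} {C : ℝ} (hg : ∀ x ∈ Set.Icc (0 : ℝ) 1, |g x| ≤ C) {x : ℝ}
    (hx : 0 ≤ x) : Summable (fun k => wt k x * g (br k x)) := by
  refine Summable.of_norm_bounded ((wt_hasSum hx).summable.mul_right C) fun k => ?_
  rw [norm_mul, Real.norm_of_nonneg (wt_nonneg k hx)]
  exact mul_le_mul_of_nonneg_left (hg _ (br_mem k hx)) (wt_nonneg k hx)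

lemma abel_ineq {c u : ℕ → ℝ} (hc : ∀ n, 0 ≤ ∑ k ∈ Finset.range n, c k) (hu : Antitone u) (n : ℕ) :
    (∑ k ∈ Finset.range n, c k) * u n ≤ ∑ k ∈ Finset.range n, c k * u k := by
  induction n with
  | zero => simp
  | succ n ih =>
    have h1 : u (n + 1) ≤ u n := hu (Nat.le_succ n)
    have h2 := mul_le_mul_of_nonneg_left h1 (hc (n + 1))
    rw [Finset.sum_range_succ] at h2 ⊢
    rw [Finset.sum_range_succ]
    linarith

section mono

variable {g : ℝ → ℝ}


lemma mono_bounds (hg : MonotoneOn g (Set.Icc 0 1)) (hg0 : g 0 = 0) {x : ℝ}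
    (hx : x ∈ Set.Icc (0 : ℝ) 1) : 0 ≤ g x ∧ g x ≤ g 1 := by
  constructor
  · rw [← hg0]; exact hg (by simp) hx hx.1
  · exact hg hx (by simp) hx.2

lemma mono_abs (hg : MonotoneOn g (Set.Icc 0 1)) (hg0 : g 0 = 0) :
    ∀ x ∈ Set.Icc (0 : ℝ) 1, |g x| ≤ g 1 := fun x hx => by
  rw [abs_of_nonneg (mono_bounds hg hg0 hx).1]; exact (mono_bounds hg hg0 hx).2

lemma tr_anti (hg : MonotoneOn g (Set.Icc 0 1)) (hg0 : g 0 = 0) :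
    AntitoneOn (tr g) (Set.Icc 0 1) := by
  intro x hx y hy hxy
  have hx0 := hx.1
  have hy0 := hy.1
  have hb := mono_abs hg hg0
  have hs1 := tr_summable hb hy0
  have hs2 := tr_summable hb hx0
  have hs3 : Summable (fun k => wt k y * g (br k x)) := by
    refine Summable.of_norm_bounded ((wt_hasSum hy0).summable.mul_right (g 1)) fun k => ?_
    rw [norm_mul, Real.norm_of_nonneg (wt_nonneg k hy0)]
    exact mul_le_mul_of_nonneg_left (hb _ (br_mem k hx0)) (wt_nonneg k hy0)
  have h1 : tr g y ≤ ∑' k : ℕ, wt k y * g (br k x) := by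
    refine hs1.tsum_le_tsum (fun k => ?_) hs3
    refine mul_le_mul_of_nonneg_left (hg (br_mem k hy0) (br_mem k hx0) ?_) (wt_nonneg k hy0)
    unfold br
    gcongr
  refine h1.trans ?_
  rw [← sub_nonneg, tr, ← hs2.tsum_sub hs3]
  refine ge_of_tendsto' (hs2.sub hs3).hasSum.tendsto_sum_nat fun n => ?_
  have hanti : Antitone (fun k : ℕ => g (br k x)) := by
    intro i j hij
    refine hg (br_mem j hx0) (br_mem i hx0) ?_
    unfold br
    gcongr
  have hpart : ∀ n, 0 ≤ ∑ k ∈ Finset.range n, (wt k x - wt k y) := by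
    intro n
    rw [Finset.sum_sub_distrib, wt_sum n hx0, wt_sum n hy0]
    have : (1 + x) / ((n : ℝ) + 1 + x) ≤ (1 + y) / ((n : ℝ) + 1 + y) := by
      rw [div_le_div_iff₀ (by positivity) (by positivity)]
      have hn : (0 : ℝ) ≤ n := Nat.cast_nonneg n
      nlinarith
    linarith
  have := abel_ineq hpart hanti n
  have h0 := mul_nonneg (hpart n) (mono_bounds hg hg0 (br_mem n hx0)).1
  calc (0 : ℝ) ≤ _ := h0
    _ ≤ _ := this
    _ = _ := Finset.sum_congr rfl fun k _ => by ring

lemma tr_osc (hg : MonotoneOn g (Set.Icc 0 1)) (hg0 : g 0 = 0) :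
    tr g 0 - tr g 1 ≤ g 1 / 2 := by
  have hb := mono_abs hg hg0
  have hs0 := tr_summable hb (le_refl (0 : ℝ))
  have hs1 := tr_summable hb (zero_le_one (α := ℝ))
  rw [tr, hs0.tsum_eq_zero_add]
  have h1 : ∑' k : ℕ, wt (k + 1) 0 * g (br (k + 1) 0) ≤ tr g 1 := by
    refine ((summable_nat_add_iff 1).2 hs0).tsum_le_tsum (fun k => ?_) hs1
    have e : br (k + 1) 0 = br k 1 := by unfold br; push_cast; ring
    rw [e]
    refine mul_le_mul_of_nonneg_right ?_ (mono_bounds hg hg0 (br_mem k zero_le_one)).1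
    unfold wt
    push_cast
    have e1 : ((k : ℝ) + 1 + 1 + 0) * ((k : ℝ) + 1 + 2 + 0) = ((k : ℝ) + 1 + 1) * ((k : ℝ) + 2 + 1) := by
      ring
    rw [e1]
    gcongr
    norm_num
  have h2 : wt 0 0 * g (br 0 0) = g 1 / 2 := by
    have : br 0 0 = 1 := by simp [br]
    rw [this]; simp [wt]; ring
  linarith

end mono

/-! ### The Gauss measure -/

/-- density of the Gauss measure -/
noncomputable def rho (x : ℝ) : ℝ := (Real.log 2)⁻¹ * (1 + x)⁻¹

/-- the Gauss measure -/
noncomputable def gm : Measure ℝ :=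
  (volume.restrict (Set.Ioo 0 1)).withDensity fun x => ENNReal.ofReal (rho x)

lemma rho_meas : Measurable rho := by unfold rho; fun_prop

lemma log_two_pos : 0 < Real.log 2 := Real.log_pos (by norm_num)

lemma rho_pos {x : ℝ} (hx : 0 ≤ x) : 0 < rho x := by
  have := log_two_pos
  unfold rho; positivity

lemma rho_le {x : ℝ} (hx : 0 ≤ x) : rho x ≤ (Real.log 2)⁻¹ := by
  have := log_two_pos
  unfold rho
  exact mul_le_of_le_one_right (by positivity) (inv_le_one_of_one_le₀ (by linarith))

lemma rho_mul_integrable {F : ℝ → ℝ} (hF : IntegrableOn F (Set.Ioo 0 1)) :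
    IntegrableOn (fun x => rho x * F x) (Set.Ioo 0 1) := by
  refine Integrable.bdd_mul (c := (Real.log 2)⁻¹) hF rho_meas.aestronglyMeasurable ?_
  filter_upwards [ae_restrict_mem measurableSet_Ioo] with x hx
  rw [Real.norm_of_nonneg (rho_pos hx.1.le).le]
  exact rho_le hx.1.le

lemma gm_integrable {F : ℝ → ℝ} (hF : IntegrableOn F (Set.Ioo 0 1)) : Integrable F gm := by
  unfold gm
  rw [integrable_withDensity_iff rho_meas.ennreal_ofReal
    (Eventually.of_forall fun x => ENNReal.ofReal_lt_top)]
  refine (rho_mul_integrable hF).congr ?_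
  filter_upwards [ae_restrict_mem measurableSet_Ioo] with x hx
  rw [ENNReal.toReal_ofReal (rho_pos hx.1.le).le, mul_comm]

lemma gm_integral (F : ℝ → ℝ) : ∫ x, F x ∂gm = ∫ x in Set.Ioo (0 : ℝ) 1, rho x * F x := by
  unfold gm
  rw [integral_withDensity_eq_integral_toReal_smul rho_meas.ennreal_ofReal
    (Eventually.of_forall fun x => ENNReal.ofReal_lt_top)]
  refine setIntegral_congr_fun measurableSet_Ioo fun x hx => ?_
  simp only [smul_eq_mul]
  rw [ENNReal.toReal_ofReal (rho_pos hx.1.le).le]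

lemma gm_setIntegral (F : ℝ → ℝ) {s : Set ℝ} (hs : MeasurableSet s) :
    ∫ x in s, F x ∂gm = ∫ x in Set.Ioo (0 : ℝ) 1, rho x * s.indicator F x := by
  rw [← integral_indicator hs, gm_integral]

lemma gm_ae_mem : ∀ᵐ x ∂gm, x ∈ Set.Ioo (0 : ℝ) 1 :=
  (withDensity_absolutelyContinuous _ _).ae_le (ae_restrict_mem measurableSet_Ioo)

lemma ae_of_gm {p : ℝ → Prop} (h : ∀ᵐ x ∂gm, p x) : ∀ᵐ x : ℝ, x ∈ Set.Ioo (0 : ℝ) 1 → p x := by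
  rw [← ae_restrict_iff' measurableSet_Ioo]
  refine (withDensity_absolutelyContinuous' rho_meas.ennreal_ofReal.aemeasurable ?_).ae_le h
  filter_upwards [ae_restrict_mem measurableSet_Ioo] with x hx
  simpa using rho_pos hx.1.le

instance gm_prob : IsProbabilityMeasure gm := by
  constructor
  have hi : IntegrableOn rho (Set.Ioo 0 1) := by
    have := rho_mul_integrable (F := fun _ => 1) (by simp)
    simpa using this
  rw [gm, withDensity_apply _ MeasurableSet.univ, Measure.restrict_univ,
    ← ofReal_integral_eq_lintegral_ofReal hi]
  · have : ∫ x in Set.Ioo (0 : ℝ) 1, rho x = 1 := by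
      unfold rho
      rw [integral_const_mul, ← integral_Ioc_eq_integral_Ioo,
        ← intervalIntegral.integral_of_le zero_le_one,
        intervalIntegral.integral_comp_add_left (fun x : ℝ => x⁻¹) 1,
        integral_inv_of_pos (by norm_num) (by norm_num)]
      have := log_two_pos.ne'
      norm_num
    rw [this]; simp
  · filter_upwards [ae_restrict_mem measurableSet_Ioo] with x hx
    exact (rho_pos hx.1.le).le

lemma gaussMap_meas : Measurable gaussMap := measurable_fract.comp measurable_inv

lemma gaussMap_br (k : ℕ) {t : ℝ} (ht : t ∈ Set.Ioo (0 : ℝ) 1) : gaussMap (br k t) = t := by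
  unfold gaussMap br
  rw [inv_inv, show (k : ℝ) + 1 + t = t + ((k + 1 : ℕ) : ℝ) by push_cast; ring, Int.fract_add_natCast]
  exact Int.fract_eq_self.2 ⟨ht.1.le, ht.2⟩

lemma duality {g : ℝ → ℝ} (hgi : IntegrableOn g (Set.Ioo 0 1)) {s : Set ℝ} (hs : MeasurableSet s) :
    ∫ x in gaussMap ⁻¹' s, g x ∂gm = ∫ x in s, tr g x ∂gm := by
  have hTs := gaussMap_meas hs
  rw [gm_setIntegral _ hTs, gm_setIntegral _ hs,
    branch_tsum (rho_mul_integrable (Integrable.indicator hgi hTs))]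
  refine setIntegral_congr_fun measurableSet_Ioo fun t ht => ?_
  have ht0 := ht.1
  by_cases hts : t ∈ s
  · have h1 : ∀ k : ℕ, br k t ∈ gaussMap ⁻¹' s := fun k => by
      rw [Set.mem_preimage, gaussMap_br k ht]; exact hts
    simp only [Set.indicator_of_mem (h1 _), Set.indicator_of_mem hts]
    rw [tr, ← tsum_mul_left]
    refine tsum_congr fun k => ?_
    have h2 : (((k : ℝ) + 1 + t) ^ 2)⁻¹ * rho (br k t) = rho t * wt k t := by
      unfold rho wt br
      have := log_two_pos.ne'
      have e1 : (k : ℝ) + 1 + t ≠ 0 := by positivity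
      have e2 : (k : ℝ) + 2 + t ≠ 0 := by positivity
      have e3 : 1 + t ≠ 0 := by positivity
      have e4 : 1 + ((k : ℝ) + 1 + t)⁻¹ = ((k : ℝ) + 2 + t) / ((k : ℝ) + 1 + t) := by
        field_simp; ring
      rw [e4]
      field_simp
    rw [← mul_assoc, h2, mul_assoc]
  · have h1 : ∀ k : ℕ, br k t ∉ gaussMap ⁻¹' s := fun k => by
      rw [Set.mem_preimage, gaussMap_br k ht]; exact hts
    simp [Set.indicator_of_notMem (h1 _), Set.indicator_of_notMem hts]

lemma gauss_preserving : MeasurePreserving gaussMap gm gm := by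
  refine ⟨gaussMap_meas, ?_⟩
  ext s hs
  rw [Measure.map_apply gaussMap_meas hs]
  have h := duality (g := fun _ => 1) (by simp) hs
  have h2 : ∫ x in s, tr (fun _ => 1) x ∂gm = ∫ x in s, (1 : ℝ) ∂gm := by
    refine integral_congr_ae (ae_restrict_of_ae ?_)
    filter_upwards [gm_ae_mem] with x hx
    simp only [tr, mul_one]
    exact (wt_hasSum hx.1.le).tsum_eq
  rw [h2] at h
  simp only [integral_const, smul_eq_mul, mul_one, measureReal_restrict_apply_univ] at h
  exact (measureReal_eq_measureReal_iff).1 h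

/-- correlation of an invariant set with a function -/
noncomputable def corr (A : Set ℝ) (g : ℝ → ℝ) : ℝ :=
  ∫ x in A, g x ∂gm - gm.real A * ∫ x, g x ∂gm

lemma mono_integrable {g : ℝ → ℝ} (hg : MonotoneOn g (Set.Icc 0 1)) :
    IntegrableOn g (Set.Ioo 0 1) :=
  (hg.integrableOn_isCompact isCompact_Icc).mono_set Set.Ioo_subset_Icc_self

lemma corr_bound {A : Set ℝ} (hA : MeasurableSet A) (hinv : gaussMap ⁻¹' A = A) (n : ℕ) :
    ∀ g : ℝ → ℝ, MonotoneOn g (Set.Icc 0 1) → g 0 = 0 → |corr A g| ≤ (1 / 2) ^ n * g 1 := by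
  induction n with
  | zero =>
    intro g hg hg0
    have hi := gm_integrable (mono_integrable hg)
    have hlo : ∀ᵐ x ∂gm, 0 ≤ g x := by
      filter_upwards [gm_ae_mem] with x hx
      exact (mono_bounds hg hg0 (Set.Ioo_subset_Icc_self hx)).1
    have hhi : ∀ᵐ x ∂gm, g x ≤ g 1 := by
      filter_upwards [gm_ae_mem] with x hx
      exact (mono_bounds hg hg0 (Set.Ioo_subset_Icc_self hx)).2
    have a1 : 0 ≤ ∫ x, g x ∂gm := integral_nonneg_of_ae hlo
    have a2 : ∫ x, g x ∂gm ≤ g 1 := by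
      have := integral_mono_ae hi (integrable_const (g 1)) hhi
      simpa using this
    have a3 : 0 ≤ ∫ x in A, g x ∂gm := integral_nonneg_of_ae (ae_restrict_of_ae hlo)
    have a4 : ∫ x in A, g x ∂gm ≤ ∫ x, g x ∂gm := setIntegral_le_integral hi hlo
    have a5 : gm.real A ≤ 1 := measureReal_le_one
    have a6 : 0 ≤ gm.real A := measureReal_nonneg
    unfold corr
    rw [abs_le]
    constructor <;> nlinarith
  | succ n ih =>
    intro g hg hg0
    have hanti := tr_anti hg hg0
    set h : ℝ → ℝ := fun x => tr g 0 - tr g x with hh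
    have hmono : MonotoneOn h (Set.Icc 0 1) := fun x hx y hy hxy => by
      have := hanti hx hy hxy
      simp only [hh]; linarith
    have h0 : h 0 = 0 := by simp [hh]
    have h1 : h 1 ≤ g 1 / 2 := tr_osc hg hg0
    have hb := ih h hmono h0
    have hgi := mono_integrable hg
    have hti : Integrable (tr g) gm := by
      have : Integrable (fun x => tr g 0 - h x) gm :=
        (integrable_const _).sub (gm_integrable (mono_integrable hmono))
      simpa [hh] using this
    have e1 : ∫ x in A, tr g x ∂gm = ∫ x in A, g x ∂gm := by
      rw [← duality hgi hA, hinv]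
    have e2 : ∫ x, tr g x ∂gm = ∫ x, g x ∂gm := by
      have := duality hgi MeasurableSet.univ
      simpa using this.symm
    have e3 : corr A h = - corr A g := by
      unfold corr
      simp only [hh]
      rw [integral_sub (integrable_const _) hti.integrableOn, integral_sub (integrable_const _) hti,
        e1, e2]
      simp
      ring
    rw [e3, abs_neg] at hb
    refine hb.trans ?_
    rw [pow_succ, mul_assoc]
    gcongr
    linarith

lemma corr_zero {A : Set ℝ} (hA : MeasurableSet A) (hinv : gaussMap ⁻¹' A = A)
    {g : ℝ → ℝ} (hg : MonotoneOn g (Set.Icc 0 1)) (hg0 : g 0 = 0) : corr A g = 0 := by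
  have h1 : Tendsto (fun n : ℕ => ((1 : ℝ) / 2) ^ n * g 1) atTop (𝓝 (0 * g 1)) :=
    (tendsto_pow_atTop_nhds_zero_of_lt_one (by norm_num) (by norm_num)).mul_const _
  rw [zero_mul] at h1
  have := ge_of_tendsto' h1 fun n => corr_bound hA hinv n g hg hg0
  exact abs_nonpos_iff.1 this

lemma gauss_indep {A : Set ℝ} (hA : MeasurableSet A) (hinv : gaussMap ⁻¹' A = A) :
    gm.restrict A = gm A • gm := by
  have hfin : IsFiniteMeasure (gm A • gm) := by
    constructor
    simp
  refine Measure.ext_of_Ici _ _ fun a => ?_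
  simp only [Measure.smul_apply, smul_eq_mul]
  rw [Measure.restrict_apply measurableSet_Ici]
  rcases lt_or_ge 0 a with ha | ha
  · have hmono : MonotoneOn ((Set.Ici a).indicator fun _ => (1 : ℝ)) (Set.Icc 0 1) := by
      intro x _ y _ hxy
      by_cases hxa : x ∈ Set.Ici a
      · have hya : y ∈ Set.Ici a := le_trans hxa hxy
        simp [hxa, hya]
      · rw [Set.indicator_of_notMem hxa]
        exact Set.indicator_nonneg (fun _ _ => zero_le_one) _
    have h0 : ((Set.Ici a).indicator fun _ => (1 : ℝ)) 0 = 0 := by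
      simp [ha]
    have := corr_zero hA hinv hmono h0
    unfold corr at this
    rw [integral_indicator measurableSet_Ici, integral_indicator measurableSet_Ici,
      Measure.restrict_restrict measurableSet_Ici] at this
    simp only [integral_const, smul_eq_mul, mul_one, measureReal_restrict_apply_univ] at this
    rw [← ENNReal.toReal_eq_toReal_iff' (by finiteness) (by finiteness), ENNReal.toReal_mul]
    simp only [measureReal_def] at this
    linarith
  · have h1 : ∀ᵐ x ∂gm, x ∈ Set.Ici a := by
      filter_upwards [gm_ae_mem] with x hx
      exact ha.trans hx.1.le
    have h2 : gm (Set.Ici a) = 1 := by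
      rw [← measure_univ (μ := gm)]; exact measure_congr (eventuallyEq_univ.2 h1)
    rw [h2, mul_one]
    refine measure_congr ?_
    rw [eventuallyEq_set]
    filter_upwards [h1] with x hx
    simp [Set.mem_inter_iff, hx]

lemma gauss_ergodic : Ergodic gaussMap gm := by
  refine ⟨gauss_preserving, ⟨fun A hA hinv => ?_⟩⟩
  have h := gauss_indep hA hinv
  have h2 : gm.restrict A Aᶜ = gm A * gm Aᶜ := by rw [h]; simp
  rw [Measure.restrict_apply hA.compl, Set.compl_inter_self, measure_empty] at h2
  rw [eventuallyConst_set']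
  rcases mul_eq_zero.1 h2.symm with h3 | h3
  · exact Or.inl (ae_eq_empty.2 h3)
  · exact Or.inr (ae_eq_univ.2 h3)

lemma gm_log_integral : ∫ x, -Real.log x ∂gm = π ^ 2 / (12 * Real.log 2) := by
  rw [gm_integral]
  unfold rho
  simp only [mul_assoc]
  rw [integral_const_mul, log_integral]
  have := log_two_pos.ne'
  field_simp

lemma levy_unit : ∀ᵐ x : ℝ, x ∈ Set.Ioo (0 : ℝ) 1 →
    Tendsto (fun n : ℕ => birkhoffSum gaussMap (fun x => - Real.log x) n x / n)
      atTop (𝓝 (π ^ 2 / (12 * Real.log 2))) := by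
  rw [← gm_log_integral]
  exact ae_of_gm (birkhoff gauss_ergodic Real.measurable_log.neg (gm_integrable log_integrable))

lemma ae_fract {p : ℝ → Prop} (h : ∀ᵐ x : ℝ, p x) : ∀ᵐ a : ℝ, p (Int.fract a) := by
  have h1 : ∀ᵐ a : ℝ, ∀ k : ℤ, p (a - k) := by
    rw [ae_all_iff]
    intro k
    exact (measurePreserving_sub_right volume (k : ℝ)).quasiMeasurePreserving.ae h
  filter_upwards [h1] with a ha
  exact ha ⌊a⌋

end KL

/-- (Khinchin–Lévy theorem.) For almost every real `a > 0`, the denominators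
`q_n` of the continued fraction convergents of `a` satisfy
`lim_{n→∞} (log q_n)/n = π²/(12 log 2)`. -/
theorem khinchin_levy :
    ∀ᵐ a : ℝ, 0 < a →
      Tendsto (fun n : ℕ => Real.log ((GenContFract.of a).dens n) / n) atTop
        (𝓝 (π ^ 2 / (12 * Real.log 2))) := by
  have hirr : ∀ᵐ a : ℝ, Irrational a := by
    have := (Set.countable_range ((↑) : ℚ → ℝ)).ae_notMem (volume : Measure ℝ)
    filter_upwards [this] with a ha using ha
  filter_upwards [hirr, KL.ae_fract KL.levy_unit] with a ha h _
  exact KL.log_dens ha (h ⟨KL.iterate_pos ha 0, KL.iterate_lt_one a 0⟩)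
end
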